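/- Let 0 < d < 1 and B > 0, let 1 < p < ∞ with p ≠ 2 and q the conjugate exponent of p, and suppose either (2 < p < ∞ and -1 < α < 0) or (1 < p < 2 and -1 < α < p - 2). Then there exists θ > 0, depending only on d, B, p, and α, with the following property: for every k ∈ A^q_α with ‖k‖_{q,α} = 1, with ‖k(e^{it}·) + k(e^{-it}·) - 2k(·)‖_{q,α} ≤ B|t|² for all real t, and whose range is contained in the set {z ∈ ℂ : -θ/2 < arg z < θ/2 and |z| > d}, the extremal function F for k has no zeros in 𝔻. -/

import Mathlib

/-!
A kernel with values in a thin sector has an extremal function close to a positive constant, and the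
regularity of the kernel upgrades closeness in norm to uniform closeness.

Both steps rest on the uniform convexity of `A^p_α`, in the integrable form `UCEst`: two unit vectors
whose midpoint comes within `η` of the extremal value differ by `O(η ^ e)` in `‖·‖ ^ p`, with `e = 1`
for `p > 2` and `e = p / 2` for `p < 2` (`extremal_close`).

* The functional attached to `k` takes a value near `1` at the normalized constant `c`, by the mean
  value property applied to `k` and to `k ^ q`, both of which have small argument (`const_pairing`).
  Hence `F` is close to `c` in `A^p_α` (`const_close`).
* The second difference bound on `k` shows that the average of the rotations of `F` by `± t / 2` has
  extremal value within `O(t ^ 2)` of the optimum. Hence the rotation of `F` by `t` differs from `F`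
  by `O(|t| ^ (2 * e))` in `‖·‖ ^ p` (`rot_close`).

Point evaluation at `z` costs `(1 - |z|) ^ (-(2 + α))` in `‖·‖ ^ p` (`point_eval`), so `rot_close`
gives a pointwise Hölder bound in the angle, and then `|z F'(z)| = O((1 - |z|) ^ (γ - 1))` with
`γ = (2 * e - 2 - α) / p` (`deriv_growth`). The hypothesis on `α` says exactly that `γ > 0`, so the
radial oscillation of `F` near the boundary is uniformly small, with constants depending only on `B`,
`p` and `α` (`radial_osc`). A radius `ρ` is fixed so that the oscillation beyond it is below `c / 2`,
and then `θ` so that `F` is within `c / 2` of `c` on `|z| ≤ ρ` (`nonvanish`).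
-/

open MeasureTheory Complex Set Metric

noncomputable section

/-- The open unit disc in `ℂ`. -/
def unitDisc : Set ℂ := Metric.ball 0 1

/-- The density of the weighted measure `dA_α = (α+1) π⁻¹ (1-|z|²)^α dA`
with respect to area measure. -/
def wt (α : ℝ) (z : ℂ) : ℝ := (α + 1) / Real.pi * (1 - ‖z‖ ^ 2) ^ α

/-- The norm `‖f‖_{p,α}` of the weighted Bergman space `A^p_α`. -/
def bNorm (p α : ℝ) (f : ℂ → ℂ) : ℝ :=
  (∫ z in unitDisc, ‖f z‖ ^ p * wt α z) ^ (1 / p)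

/-- Membership in the weighted Bergman space `A^p_α`: analytic on the unit disc
with finite weighted `p`-norm. -/
def MemAp (p α : ℝ) (f : ℂ → ℂ) : Prop :=
  DifferentiableOn ℂ f unitDisc ∧
    IntegrableOn (fun z => ‖f z‖ ^ p * wt α z) unitDisc

/-- The pairing `∫_𝔻 f k̄ dA_α`. -/
def pairing (α : ℝ) (f k : ℂ → ℂ) : ℂ :=
  ∫ z in unitDisc, f z * (starRingEnd ℂ) (k z) * (wt α z : ℂ)

/-- `F` is the extremal function in `A^p_α` for the integral kernel `k`:
it has unit norm and maximizes `Re ∫_𝔻 F k̄ dA_α` over the unit ball. -/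
def IsExtremalFor (p α : ℝ) (k F : ℂ → ℂ) : Prop :=
  MemAp p α F ∧ bNorm p α F = 1 ∧
    ∀ g, MemAp p α g → bNorm p α g ≤ 1 →
      (pairing α g k).re ≤ (pairing α F k).re

/-! ### Uniform convexity of the modulus -/

/-- Clarkson's inequality for scalars, from the parallelogram law. -/
lemma uc_ge {p : ℝ} (hp : 2 ≤ p) (a b : ℂ) :
    ‖(a + b) / 2‖ ^ p + ‖(a - b) / 2‖ ^ p ≤ (‖a‖ ^ p + ‖b‖ ^ p) / 2 := by
  have key : ∀ z : ℂ, ‖z‖ ^ p = (‖z‖ ^ 2) ^ (p / 2) := fun z => by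
    rw [← Real.rpow_natCast, ← Real.rpow_mul (norm_nonneg _)]; congr 1; push_cast; ring
  have hpar : ‖(a + b) / 2‖ ^ 2 + ‖(a - b) / 2‖ ^ 2 = (1/2) * ‖a‖ ^ 2 + (1/2) * ‖b‖ ^ 2 := by
    have := parallelogram_law_with_norm ℝ a b
    simp only [norm_div, Complex.norm_ofNat]
    nlinarith
  simp only [key]
  have h1 := Real.add_rpow_le_rpow_add (sq_nonneg ‖(a + b) / 2‖) (sq_nonneg ‖(a - b) / 2‖)
    (show 1 ≤ p / 2 by linarith)
  have h2 := (convexOn_rpow (show 1 ≤ p / 2 by linarith)).2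
    (mem_Ici.2 (sq_nonneg ‖a‖)) (mem_Ici.2 (sq_nonneg ‖b‖))
    (show (0:ℝ) ≤ 1/2 by norm_num) (show (0:ℝ) ≤ 1/2 by norm_num) (by norm_num)
  simp only [smul_eq_mul] at h2
  rw [hpar] at h1
  linarith

/-- On `[0, L]` the second derivative of `s ^ p` is at least its value at `L`, so `s ^ p` minus the
corresponding multiple of `s ^ 2` is still convex and increasing. -/
lemma pow_sub_sq_convex {p L : ℝ} (hp1 : 1 < p) (hp2 : p < 2) (hL : 0 < L) :
    ConvexOn ℝ (Icc 0 L) (fun s : ℝ => s ^ p - p * (p - 1) / 2 * L ^ (p - 2) * s ^ 2) ∧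
    MonotoneOn (fun s : ℝ => s ^ p - p * (p - 1) / 2 * L ^ (p - 2) * s ^ 2) (Icc 0 L) := by
  have hc : ContinuousOn (fun s : ℝ => s ^ p - p * (p - 1) / 2 * L ^ (p - 2) * s ^ 2) (Icc 0 L) := by
    apply Continuous.continuousOn
    exact (Real.continuous_rpow_const (by linarith)).sub (by fun_prop)
  have hd : ∀ s : ℝ, HasDerivAt (fun s : ℝ => s ^ p - p * (p - 1) / 2 * L ^ (p - 2) * s ^ 2)
      (p * s ^ (p - 1) - p * (p - 1) * L ^ (p - 2) * s) s := fun s => by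
    refine ((Real.hasDerivAt_rpow_const (x := s) (p := p) (Or.inr hp1.le)).sub
      ((hasDerivAt_pow 2 s).const_mul (p * (p - 1) / 2 * L ^ (p - 2)))).congr_deriv ?_
    push_cast; ring
  have hd2 : ∀ s : ℝ, 0 < s → HasDerivAt (fun s : ℝ => p * s ^ (p - 1) - p * (p - 1) * L ^ (p - 2) * s)
      (p * (p - 1) * s ^ (p - 2) - p * (p - 1) * L ^ (p - 2)) s := fun s hs => by
    refine (((Real.hasDerivAt_rpow_const (x := s) (p := p - 1) (Or.inl hs.ne')).const_mul p).sub
      ((hasDerivAt_id s).const_mul (p * (p - 1) * L ^ (p - 2)))).congr_deriv ?_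
    rw [show p - 1 - 1 = p - 2 by ring]; ring
  have hcmp : ∀ s ∈ Ioo 0 L, L ^ (p - 2) ≤ s ^ (p - 2) := fun s hs =>
    Real.rpow_le_rpow_of_nonpos hs.1 hs.2.le (by linarith)
  have hderiv : deriv (fun s : ℝ => s ^ p - p * (p - 1) / 2 * L ^ (p - 2) * s ^ 2) =
      fun s => p * s ^ (p - 1) - p * (p - 1) * L ^ (p - 2) * s := funext fun s => (hd s).deriv
  constructor
  · apply convexOn_of_deriv2_nonneg (convex_Icc 0 L) hc
    · intro s _; exact (hd s).differentiableAt.differentiableWithinAt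
    · rw [hderiv, interior_Icc]
      intro s hs; exact (hd2 s hs.1).differentiableAt.differentiableWithinAt
    · rw [interior_Icc]
      intro s hs
      simp only [Function.iterate_succ, Function.iterate_zero, Function.comp, id]
      rw [hderiv, (hd2 s hs.1).deriv]
      have := hcmp s hs
      have : 0 ≤ p * (p - 1) := by nlinarith
      nlinarith
  · apply monotoneOn_of_deriv_nonneg (convex_Icc 0 L) hc
    · intro s _; exact (hd s).differentiableAt.differentiableWithinAt
    · rw [interior_Icc]
      intro s hs
      rw [(hd s).deriv]
      have h1 := hcmp s hs
      have h2 : s ^ (p - 1) = s ^ (p - 2) * s := by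
        rw [← Real.rpow_add_one hs.1.ne']; ring_nf
      rw [h2]
      have h3 : 0 ≤ L ^ (p - 2) := Real.rpow_nonneg hL.le _
      have h4 : (p - 1) * L ^ (p - 2) ≤ s ^ (p - 2) := by nlinarith
      have h5 : 0 ≤ p * s := by nlinarith [hs.1]
      nlinarith

/-- The two-point strong convexity inequality with centre `x` and increment `y`. For `y > x` the
point `x - y` is replaced by `|x - y|`, which monotonicity allows. -/
lemma uc_real {p x y : ℝ} (hp1 : 1 < p) (hp2 : p < 2) (hx : 0 ≤ x) (hy : 0 ≤ y) (hL : 0 < x + y) :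
    x ^ p + p * (p - 1) / 2 * (x + y) ^ (p - 2) * y ^ 2 ≤ ((x + y) ^ p + |x - y| ^ p) / 2 := by
  obtain ⟨hc, hm⟩ := pow_sub_sq_convex hp1 hp2 hL
  have habs : |x - y| ≤ x + y := abs_le.2 ⟨by linarith, by linarith⟩
  have m1 : x + y ∈ Icc 0 (x + y) := ⟨hL.le, le_rfl⟩
  have m2 : |x - y| ∈ Icc 0 (x + y) := ⟨abs_nonneg _, habs⟩
  have h1 := hc.2 m1 m2 (show (0:ℝ) ≤ 1/2 by norm_num) (show (0:ℝ) ≤ 1/2 by norm_num) (by norm_num)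
  have m3 := hc.1 m1 m2 (show (0:ℝ) ≤ 1/2 by norm_num) (show (0:ℝ) ≤ 1/2 by norm_num) (by norm_num)
  have h2 := hm (show x ∈ Icc 0 (x + y) from ⟨hx, by linarith⟩) m3 (by
    simp only [smul_eq_mul]; linarith [le_abs_self (x - y)])
  have h3 := h2.trans h1
  simp only [smul_eq_mul, sq_abs] at h3
  linarith

/-- For a concave power, spreading the pair `A ± u` out to `A ± U` lowers the sum. -/
lemma concave_pair {m A u U : ℝ} (hm0 : 0 ≤ m) (hm1 : m ≤ 1) (hu : |u| ≤ U) (hU : U ≤ A) :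
    (A + U) ^ m + (A - U) ^ m ≤ (A + u) ^ m + (A - u) ^ m := by
  have hU0 : 0 ≤ U := (abs_nonneg u).trans hu
  rcases hU0.eq_or_lt with h0 | h0
  · subst h0
    have : u = 0 := by simpa using hu
    simp [this]
  obtain ⟨hu1, hu2⟩ := abs_le.1 hu
  have hc := (Real.concaveOn_rpow hm0 hm1).2
  have mA : A + U ∈ Ici (0:ℝ) := by simp only [mem_Ici]; linarith
  have mB : A - U ∈ Ici (0:ℝ) := by simp only [mem_Ici]; linarith
  have a1 : 0 ≤ (U + u) / (2 * U) := by apply div_nonneg <;> linarith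
  have a2 : 0 ≤ (U - u) / (2 * U) := by apply div_nonneg <;> linarith
  have a3 : (U + u) / (2 * U) + (U - u) / (2 * U) = 1 := by field_simp; ring
  have h1 := hc mA mB a1 a2 a3
  have h2 := hc mA mB a2 a1 (by rw [add_comm]; exact a3)
  simp only [smul_eq_mul] at h1 h2
  have e1 : (U + u) / (2 * U) * (A + U) + (U - u) / (2 * U) * (A - U) = A + u := by field_simp; ring
  have e2 : (U - u) / (2 * U) * (A + U) + (U + u) / (2 * U) * (A - U) = A - u := by field_simp; ring
  rw [e1] at h1; rw [e2] at h2
  have : ((U + u) / (2 * U) + (U - u) / (2 * U)) * ((A + U) ^ m + (A - U) ^ m) =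
      (A + U) ^ m + (A - U) ^ m := by rw [a3, one_mul]
  linarith

/-- The scalar uniform convexity inequality for `1 < p < 2`. With `a = x + y` and `b = x - y`, the sum
`|a| ^ p + |b| ^ p` is smallest, for given `|x|` and `|y|`, when `x` and `y` are parallel
(`concave_pair` with exponent `p / 2`), which is the real case `uc_real`. -/
lemma uc_lt {p : ℝ} (hp1 : 1 < p) (hp2 : p < 2) (a b : ℂ) :
    ‖(a + b) / 2‖ ^ p + p * (p - 1) / 8 * (‖a - b‖ ^ 2 * (‖a‖ + ‖b‖) ^ (p - 2)) ≤
      (‖a‖ ^ p + ‖b‖ ^ p) / 2 := by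
  by_cases h0 : ‖a‖ + ‖b‖ = 0
  · have ha : a = 0 := norm_eq_zero.1 (by nlinarith [norm_nonneg a, norm_nonneg b])
    have hb : b = 0 := norm_eq_zero.1 (by nlinarith [norm_nonneg a, norm_nonneg b])
    subst ha hb
    simp [Real.zero_rpow (show p ≠ 0 by linarith)]
  obtain ⟨x, hx⟩ : ∃ x, x = (a + b) / 2 := ⟨_, rfl⟩
  obtain ⟨y, hy⟩ : ∃ y, y = (a - b) / 2 := ⟨_, rfl⟩
  have ea : a = x + y := by rw [hx, hy]; ring
  have eb : b = x - y := by rw [hx, hy]; ring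
  have key : ∀ z : ℝ, 0 ≤ z → z ^ p = (z ^ 2) ^ (p / 2) := fun z hz => by
    rw [← Real.rpow_natCast, ← Real.rpow_mul hz]; congr 1; push_cast; ring
  have na : ‖a‖ ^ 2 = (‖x‖ ^ 2 + ‖y‖ ^ 2) + 2 * inner ℝ x y := by
    rw [ea, norm_add_sq_real]; ring
  have nb : ‖b‖ ^ 2 = (‖x‖ ^ 2 + ‖y‖ ^ 2) - 2 * inner ℝ x y := by
    rw [eb, norm_sub_sq_real]; ring
  have hin := abs_real_inner_le_norm x y
  have h1 := concave_pair (m := p / 2) (A := ‖x‖ ^ 2 + ‖y‖ ^ 2) (u := 2 * inner ℝ x y)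
    (U := 2 * (‖x‖ * ‖y‖)) (by linarith) (by linarith)
    (by rw [abs_mul, abs_two]; linarith) (by nlinarith [sq_nonneg (‖x‖ - ‖y‖)])
  rw [← na, ← nb, ← key _ (norm_nonneg a), ← key _ (norm_nonneg b),
    show ‖x‖ ^ 2 + ‖y‖ ^ 2 + 2 * (‖x‖ * ‖y‖) = (‖x‖ + ‖y‖) ^ 2 by ring,
    show ‖x‖ ^ 2 + ‖y‖ ^ 2 - 2 * (‖x‖ * ‖y‖) = |‖x‖ - ‖y‖| ^ 2 by rw [sq_abs]; ring,
    ← key _ (by positivity), ← key _ (by positivity)] at h1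
  have hxle : ‖x‖ ≤ (‖a‖ + ‖b‖) / 2 := by
    rw [hx, norm_div, Complex.norm_ofNat]; linarith [norm_add_le a b]
  have hyle : ‖y‖ ≤ (‖a‖ + ‖b‖) / 2 := by
    rw [hy, norm_div, Complex.norm_ofNat]; linarith [norm_sub_le a b]
  have hyeq : ‖a - b‖ = 2 * ‖y‖ := by
    rw [hy, norm_div, Complex.norm_ofNat]; ring
  have hL : 0 < ‖x‖ + ‖y‖ := by
    rcases (add_nonneg (norm_nonneg x) (norm_nonneg y)).eq_or_lt with h | h
    · exfalso; apply h0
      have := norm_add_le x y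
      have := norm_sub_le x y
      rw [← ea] at *; rw [← eb] at *
      linarith [norm_nonneg a, norm_nonneg b]
    · exact h
  have h2 := uc_real hp1 hp2 (norm_nonneg x) (norm_nonneg y) hL
  have h3 : (‖a‖ + ‖b‖) ^ (p - 2) ≤ (‖x‖ + ‖y‖) ^ (p - 2) :=
    Real.rpow_le_rpow_of_nonpos hL (by linarith) (by linarith)
  rw [← hx, hyeq]
  have h4 : 0 ≤ p * (p - 1) / 2 * ‖y‖ ^ 2 := by
    have : 0 ≤ p - 1 := by linarith
    positivity
  have h5 := mul_le_mul_of_nonneg_left h3 h4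
  linarith

/-- A quantitative form of the uniform convexity of `|·| ^ p` on `ℂ`: if `|a|, |b| ≤ 1` and
`|(a + b) / 2| ^ p` falls short of the mean of `|a| ^ p` and `|b| ^ p` by at most `η`, then
`|a - b| ^ p` is of order `η ^ e`. The parameter `η` is kept free so that the inequality is linear in
the `p`-th powers and can be integrated, `η` being chosen afterwards. -/
def UCEst (p e C : ℝ) : Prop := ∀ η : ℝ, 0 < η → ∀ a b : ℂ,
      ‖a - b‖ ^ p ≤ C * η ^ e * (((‖a‖ ^ p + ‖b‖ ^ p) / 2 - ‖(a + b) / 2‖ ^ p) / η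
        + (‖a‖ ^ p + ‖b‖ ^ p))

/-- The exponent is `e = 1` for `p > 2` and `e = p / 2` for `p < 2`. The hypothesis on `α` is exactly
what makes `2 * e` exceed `2 + α`. -/
lemma uc_pointwise {p α : ℝ} (hp1 : 1 < p)
    (hpα : (2 < p ∧ -1 < α ∧ α < 0) ∨ (p < 2 ∧ -1 < α ∧ α < p - 2)) :
    ∃ e C : ℝ, 0 < e ∧ 2 + α < 2 * e ∧ 0 < C ∧ UCEst p e C := by
  rcases hpα with ⟨hp, h1, h2⟩ | ⟨hp, h1, h2⟩
  · refine ⟨1, 2 ^ p, one_pos, by linarith, by positivity, fun η hη a b => ?_⟩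
    have h := uc_ge hp.le a b
    rw [norm_div (a - b), Complex.norm_ofNat, Real.div_rpow (norm_nonneg _) (by norm_num)] at h
    have h3 : ‖a - b‖ ^ p / 2 ^ p ≤ (‖a‖ ^ p + ‖b‖ ^ p) / 2 - ‖(a + b) / 2‖ ^ p := by linarith
    rw [div_le_iff₀ (by positivity)] at h3
    rw [Real.rpow_one, mul_add]
    have h4 : 2 ^ p * η * (((‖a‖ ^ p + ‖b‖ ^ p) / 2 - ‖(a + b) / 2‖ ^ p) / η) =
      ((‖a‖ ^ p + ‖b‖ ^ p) / 2 - ‖(a + b) / 2‖ ^ p) * 2 ^ p := by field_simp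
    rw [h4]
    have : 0 ≤ 2 ^ p * η * (‖a‖ ^ p + ‖b‖ ^ p) := by positivity
    linarith
  · have hc : 0 < p * (p - 1) / 8 := by
      have : 0 < p - 1 := by linarith
      positivity
    refine ⟨p / 2, 8 / (p * (p - 1)) + 2 ^ p, by linarith, by linarith, ?_, fun η hη a b => ?_⟩
    · have : 0 < p - 1 := by linarith
      positivity
    have h := uc_lt hp1 hp a b
    set D := (‖a‖ ^ p + ‖b‖ ^ p) / 2 - ‖(a + b) / 2‖ ^ p with hD
    set T := ‖a - b‖ ^ 2 * (‖a‖ + ‖b‖) ^ (p - 2) with hT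
    have hT0 : 0 ≤ T := by positivity
    have hTD : T ≤ 8 / (p * (p - 1)) * D := by
      have : p * (p - 1) / 8 * T ≤ D := by linarith
      have h9 : 8 / (p * (p - 1)) * (p * (p - 1) / 8 * T) = T := by
        have : p - 1 ≠ 0 := by linarith
        field_simp
      rw [← h9]
      apply mul_le_mul_of_nonneg_left this
      have : 0 < p - 1 := by linarith
      positivity
    have hS : (‖a‖ + ‖b‖) ^ p ≤ 2 ^ p * (‖a‖ ^ p + ‖b‖ ^ p) := by
      have h2 := (convexOn_rpow hp1.le).2
        (show ‖a‖ ∈ Ici (0:ℝ) from norm_nonneg _) (show ‖b‖ ∈ Ici (0:ℝ) from norm_nonneg _)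
        (show (0:ℝ) ≤ 1/2 by norm_num) (show (0:ℝ) ≤ 1/2 by norm_num) (by norm_num)
      simp only [smul_eq_mul] at h2
      have h3 : (‖a‖ + ‖b‖) ^ p = 2 ^ p * (1/2 * ‖a‖ + 1/2 * ‖b‖) ^ p := by
        rw [← Real.mul_rpow (by norm_num) (by positivity)]; congr 1; ring
      rw [h3]
      gcongr
      have := Real.rpow_nonneg (norm_nonneg a) p
      have := Real.rpow_nonneg (norm_nonneg b) p
      linarith
    -- Young's inequality is applied to this factorization of `|a - b| ^ p`.
    have hfac : ‖a - b‖ ^ p = η ^ (p / 2) * ((T / η) ^ (p / 2) * ((‖a‖ + ‖b‖) ^ p) ^ (1 - p / 2)) := by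
      by_cases h0 : ‖a‖ + ‖b‖ = 0
      · have ha : a = 0 := norm_eq_zero.1 (by nlinarith [norm_nonneg a, norm_nonneg b])
        have hb : b = 0 := norm_eq_zero.1 (by nlinarith [norm_nonneg a, norm_nonneg b])
        simp [hT, ha, hb, Real.zero_rpow (show p ≠ 0 by linarith),
          Real.zero_rpow (show p / 2 ≠ 0 by linarith)]
      have hpos : 0 < ‖a‖ + ‖b‖ := lt_of_le_of_ne (by positivity) (Ne.symm h0)
      rw [← mul_assoc, ← Real.mul_rpow hη.le (by positivity), mul_div_cancel₀ _ hη.ne', hT,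
        Real.mul_rpow (by positivity) (by positivity), ← Real.rpow_mul hpos.le,
        ← Real.rpow_mul hpos.le, mul_assoc, ← Real.rpow_add hpos,
        ← Real.rpow_natCast, ← Real.rpow_mul (norm_nonneg _)]
      rw [show (p - 2) * (p / 2) + p * (1 - p / 2) = 0 by ring, Real.rpow_zero, mul_one]
      congr 1; push_cast; ring
    have hgm := Real.geom_mean_le_arith_mean2_weighted (w₁ := p / 2) (w₂ := 1 - p / 2)
      (p₁ := T / η) (p₂ := (‖a‖ + ‖b‖) ^ p) (by linarith) (by linarith) (by positivity)
      (by positivity) (by ring)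
    have hD0 : 0 ≤ D := by nlinarith
    have hgm2 : (T / η) ^ (p / 2) * ((‖a‖ + ‖b‖) ^ p) ^ (1 - p / 2) ≤
        T / η + (‖a‖ + ‖b‖) ^ p := by
      have t1 : 0 ≤ T / η := by positivity
      have t2 : 0 ≤ (‖a‖ + ‖b‖) ^ p := by positivity
      nlinarith
    rw [hfac]
    have hK : 0 < 8 / (p * (p - 1)) := by
      have : 0 < p - 1 := by linarith
      positivity
    have hfin : T / η + (‖a‖ + ‖b‖) ^ p ≤ (8 / (p * (p - 1)) + 2 ^ p) * (D / η + (‖a‖ ^ p + ‖b‖ ^ p)) := by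
      have : T / η ≤ 8 / (p * (p - 1)) * (D / η) := by
        rw [← mul_div_assoc]; gcongr
      have x1 : 0 ≤ 8 / (p * (p - 1)) * (‖a‖ ^ p + ‖b‖ ^ p) := by positivity
      have x2 : 0 ≤ 2 ^ p * (D / η) := by positivity
      linarith
    calc _ ≤ η ^ (p / 2) * ((8 / (p * (p - 1)) + 2 ^ p) * (D / η + (‖a‖ ^ p + ‖b‖ ^ p))) := by
          exact mul_le_mul_of_nonneg_left (hgm2.trans hfin) (by positivity)
      _ = _ := by ring

/-! ### The weighted area measure and the mean value property -/

/-- The weighted area measure `dA_α` on the disc, as a measure on `ℂ`. Outside the disc it vanishes,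
so the values taken there by `wt` play no role. -/
def muA (α : ℝ) : Measure ℂ :=
  (volume.restrict unitDisc).withDensity (fun z => ENNReal.ofReal (wt α z))

lemma measurableSet_unitDisc : MeasurableSet unitDisc := measurableSet_ball

lemma measurable_wt (α : ℝ) : Measurable (wt α) := by
  unfold wt
  fun_prop

lemma one_sub_sq_pos {z : ℂ} (hz : z ∈ unitDisc) : 0 < 1 - ‖z‖ ^ 2 := by
  have : ‖z‖ < 1 := by simpa [unitDisc] using hz
  nlinarith [norm_nonneg z]

lemma wt_nonneg {α : ℝ} (hα : -1 < α) {z : ℂ} (hz : z ∈ unitDisc) : 0 ≤ wt α z := by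
  have := one_sub_sq_pos hz
  have : 0 ≤ α + 1 := by linarith
  unfold wt; positivity

lemma integral_muA {E : Type*} [NormedAddCommGroup E] [NormedSpace ℝ E] {α : ℝ} (hα : -1 < α)
    (f : ℂ → E) : ∫ z, f z ∂(muA α) = ∫ z in unitDisc, wt α z • f z := by
  unfold muA
  rw [integral_withDensity_eq_integral_toReal_smul (measurable_wt α).ennreal_ofReal
    (by simp)]
  apply setIntegral_congr_fun measurableSet_unitDisc
  intro z hz
  simp only [ENNReal.toReal_ofReal (wt_nonneg hα hz)]

lemma integrable_muA {E : Type*} [NormedAddCommGroup E] [NormedSpace ℝ E] {α : ℝ} (hα : -1 < α)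
    (f : ℂ → E) : Integrable f (muA α) ↔ IntegrableOn (fun z => wt α z • f z) unitDisc := by
  unfold muA
  rw [integrable_withDensity_iff_integrable_smul' (measurable_wt α).ennreal_ofReal (by simp)]
  apply integrableOn_congr_fun _ measurableSet_unitDisc
  intro z hz
  simp only [ENNReal.toReal_ofReal (wt_nonneg hα hz)]

lemma muA_compl (α : ℝ) : muA α unitDiscᶜ = 0 := by
  have : (volume.restrict unitDisc) unitDiscᶜ = 0 := by
    rw [Measure.restrict_apply measurableSet_unitDisc.compl]; simp
  exact withDensity_absolutelyContinuous _ _ this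

lemma exp_mul_mem {z : ℂ} (t : ℝ) : Complex.exp (t * I) * z ∈ unitDisc ↔ z ∈ unitDisc := by
  simp [unitDisc, Complex.norm_exp_ofReal_mul_I]

lemma measurePreserving_rot (t : ℝ) :
    MeasurePreserving (fun z : ℂ => Complex.exp (t * I) * z) volume volume := by
  have := (rotation (Circle.exp t)).measurePreserving
  convert! this using 1

lemma measurePreserving_rot_disc (t : ℝ) :
    MeasurePreserving (fun z : ℂ => Complex.exp (t * I) * z)
      (volume.restrict unitDisc) (volume.restrict unitDisc) := by
  have := (measurePreserving_rot t).restrict_preimage measurableSet_unitDisc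
  have h : (fun z : ℂ => Complex.exp (t * I) * z) ⁻¹' unitDisc = unitDisc := by
    ext z; exact exp_mul_mem t
  rwa [h] at this

lemma measurePreserving_rot_muA (α t : ℝ) :
    MeasurePreserving (fun z : ℂ => Complex.exp (t * I) * z) (muA α) (muA α) := by
  have h := measurePreserving_rot_disc t
  refine ⟨h.measurable, ?_⟩
  ext s hs
  unfold muA
  rw [Measure.map_apply h.measurable hs, withDensity_apply _ (h.measurable hs),
    withDensity_apply _ hs,
    ← h.setLIntegral_comp_preimage hs (measurable_wt α).ennreal_ofReal]
  simp [wt, Complex.norm_exp_ofReal_mul_I]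

lemma measurableEmbedding_rot (t : ℝ) :
    MeasurableEmbedding (fun z : ℂ => Complex.exp (t * I) * z) :=
  measurableEmbedding_mulLeft₀ (Complex.exp_ne_zero _)

/-- The mean value property for a rotation-invariant measure on the disc: average over all rotations
and apply the mean value property on circles. -/
lemma mean_value {ν : Measure ℂ} [IsFiniteMeasure ν] (hν : ν unitDiscᶜ = 0)
    (hrot : ∀ t : ℝ, MeasurePreserving (fun z : ℂ => Complex.exp (t * I) * z) ν ν) {h : ℂ → ℂ}
    (hd : DifferentiableOn ℂ h unitDisc) (hi : Integrable h ν) :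
    ∫ z, h z ∂ν = ν.real univ • h 0 := by
  have hmem : ∀ᵐ z ∂ν, z ∈ unitDisc := by rw [ae_iff]; exact hν
  -- Outside the disc `h` is arbitrary; its restriction to the disc is measurable.
  set h' := unitDisc.indicator h with hh'
  have hm : Measurable h' := by
    classical
    rw [hh', ← Set.piecewise_eq_indicator]
    exact ContinuousOn.measurable_piecewise hd.continuousOn continuousOn_const measurableSet_unitDisc
  have hae : h =ᵐ[ν] h' := by
    filter_upwards [hmem] with z hz
    simp [hh', hz]
  have hi' : Integrable h' ν := hi.congr hae
  have hsw := intervalIntegral_integral_swap (μ := ν) (a := 0) (b := 2 * Real.pi)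
    (f := fun t z => h' (Complex.exp (t * I) * z)) (by
      have hmeas : Measurable (Function.uncurry fun (t : ℝ) (z : ℂ) => h' (Complex.exp (t * I) * z)) :=
        hm.comp (by fun_prop)
      rw [integrable_prod_iff hmeas.aestronglyMeasurable]
      constructor
      · exact Filter.Eventually.of_forall fun t =>
          (hrot t).integrable_comp_of_integrable hi'
      · have : (fun t : ℝ => ∫ z, ‖Function.uncurry (fun (t : ℝ) (z : ℂ) => h' (Complex.exp (t * I) * z)) (t, z)‖ ∂ν)
            = fun _ => ∫ z, ‖h' z‖ ∂ν := by
          funext t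
          exact (hrot t).integral_comp (measurableEmbedding_rot t) (fun z => ‖h' z‖)
        rw [this, uIoc_of_le (by positivity)]
        exact integrable_const _)
  have hL : ∀ t : ℝ, ∫ z, h' (Complex.exp (t * I) * z) ∂ν = ∫ z, h' z ∂ν := fun t =>
    (hrot t).integral_comp (measurableEmbedding_rot t) h'
  have hR : ∀ z ∈ unitDisc, ∫ t in (0:ℝ)..2 * Real.pi, h' (Complex.exp (t * I) * z) =
      (2 * Real.pi) • h 0 := by
    intro z hz
    have hz1 : ‖z‖ < 1 := by simpa [unitDisc] using hz
    have hmaps : MapsTo (fun w : ℂ => w * z) (closedBall 0 1) unitDisc := by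
      intro w hw
      have : ‖w‖ ≤ 1 := by simpa using hw
      simp only [unitDisc, mem_ball_zero_iff, norm_mul]
      nlinarith [norm_nonneg z]
    have hdc : DifferentiableOn ℂ (fun w => h (w * z)) (closedBall 0 1) :=
      hd.comp (by fun_prop) hmaps
    have hca := DiffContOnCl.circleAverage (f := fun w => h (w * z)) (c := 0) (R := 1) (by
      rw [abs_one]
      exact hdc.diffContOnCl_ball (subset_refl _))
    rw [Real.circleAverage] at hca
    have hpi : (2 * Real.pi) ≠ 0 := by positivity
    rw [inv_smul_eq_iff₀ hpi] at hca
    rw [zero_mul] at hca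
    rw [← hca]
    apply intervalIntegral.integral_congr
    intro t _
    simp only [hh', circleMap, zero_add, ofReal_one, one_mul]
    rw [indicator_of_mem ((exp_mul_mem t).2 hz)]
  simp only [hL] at hsw
  rw [intervalIntegral.integral_const, sub_zero] at hsw
  have hsw2 : ∫ z, (∫ t in (0:ℝ)..2 * Real.pi, h' (Complex.exp (t * I) * z)) ∂ν =
      ∫ z, (2 * Real.pi) • h 0 ∂ν := by
    apply integral_congr_ae
    filter_upwards [hmem] with z hz using hR z hz
  rw [hsw2, integral_const, smul_comm] at hsw
  have hpi : (2 * Real.pi) ≠ 0 := by positivity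
  rw [integral_congr_ae hae]
  exact smul_right_injective _ hpi hsw

/-! ### Growth of point evaluations -/

lemma integral_disc_scale (φ : ℂ → ℝ) (z : ℂ) {r : ℝ} (hr : 0 < r) :
    ∫ w in unitDisc, φ (z + r * w) = (r ^ 2)⁻¹ * ∫ w in ball z r, φ w := by
  rw [← integral_indicator measurableSet_unitDisc, ← integral_indicator measurableSet_ball]
  have h1 : ∀ w : ℂ, unitDisc.indicator (fun w => φ (z + r * w)) w =
      (fun v => (ball z r).indicator φ (z + v)) (r • w) := by
    intro w
    have hiff : w ∈ unitDisc ↔ z + (r : ℂ) * w ∈ ball z r := by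
      simp only [unitDisc, mem_ball_iff_norm, sub_zero, add_sub_cancel_left, norm_mul,
        Complex.norm_real, Real.norm_eq_abs, abs_of_pos hr]
      constructor
      · intro h; nlinarith
      · intro h; nlinarith
    by_cases hw : w ∈ unitDisc
    · simp only [real_smul, indicator_of_mem hw, indicator_of_mem (hiff.1 hw)]
    · simp only [real_smul, indicator_of_notMem hw, indicator_of_notMem (fun h => hw (hiff.2 h))]
  simp only [h1]
  rw [Measure.integral_comp_smul volume (fun v => (ball z r).indicator φ (z + v)) r, Complex.finrank_real_complex, abs_of_pos (by positivity),
    smul_eq_mul]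
  congr 1
  exact integral_add_left_eq_self (fun v => (ball z r).indicator φ v) z

/-- Growth of point evaluations: Jensen's inequality on the disc of radius `(1 - |z|) / 2` about `z`,
on which `1 - |w| ^ 2` is at most `3 (1 - |z|)`. Since `α < 0`, this bounds the weight below. -/
lemma point_eval {p α : ℝ} (hp : 1 < p) (hα : -1 < α) (hα0 : α < 0) :
    ∃ C : ℝ, 0 < C ∧ ∀ g : ℂ → ℂ, DifferentiableOn ℂ g unitDisc →
      Integrable (fun z => ‖g z‖ ^ p) (muA α) → ∀ z ∈ unitDisc,
      ‖g z‖ ^ p ≤ C * (1 - ‖z‖) ^ (-(2 + α)) * ∫ w, ‖g w‖ ^ p ∂(muA α) := by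
  set ν : Measure ℂ := volume.restrict unitDisc with hν
  have : IsFiniteMeasure ν := ⟨by
    rw [hν, Measure.restrict_apply_univ]; exact measure_ball_lt_top⟩
  have hV : 0 < ν.real univ := by
    rw [measureReal_def, hν, Measure.restrict_apply_univ]
    exact ENNReal.toReal_pos (measure_ball_pos _ _ one_pos).ne' measure_ball_lt_top.ne
  have hνc : ν unitDiscᶜ = 0 := by
    rw [hν, Measure.restrict_apply measurableSet_unitDisc.compl]; simp
  have hα1 : 0 < α + 1 := by linarith
  refine ⟨(ν.real univ)⁻¹ * 4 * (Real.pi / (α + 1)) * 3 ^ (-α), by positivity, ?_⟩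
  intro g hg hgi z hz
  have hz1 : ‖z‖ < 1 := by simpa [unitDisc] using hz
  set δ := 1 - ‖z‖ with hδ
  have hδ0 : 0 < δ := by linarith
  set r := δ / 2 with hr
  have hr0 : 0 < r := by positivity
  have hmaps : MapsTo (fun w : ℂ => z + r * w) (closedBall 0 1) unitDisc := by
    intro w hw
    have hw1 : ‖w‖ ≤ 1 := by simpa using hw
    have : ‖z + r * w‖ ≤ ‖z‖ + r * ‖w‖ := by
      refine (norm_add_le _ _).trans ?_
      rw [norm_mul, Complex.norm_real, Real.norm_of_nonneg hr0.le]
    simp only [unitDisc, mem_ball_zero_iff]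
    nlinarith
  have hcont : ContinuousOn (fun w : ℂ => g (z + r * w)) (closedBall 0 1) :=
    hg.continuousOn.comp (by fun_prop) hmaps
  have hsub : unitDisc ⊆ closedBall (0:ℂ) 1 := ball_subset_closedBall
  have hint : Integrable (fun w : ℂ => g (z + r * w)) ν :=
    (hcont.integrableOn_compact (isCompact_closedBall _ _)).mono_set hsub
  have hcontp : ContinuousOn (fun w : ℂ => ‖g (z + r * w)‖ ^ p) (closedBall 0 1) :=
    (Real.continuous_rpow_const (by linarith)).comp_continuousOn hcont.norm
  have hintp : Integrable (fun w : ℂ => ‖g (z + r * w)‖ ^ p) ν :=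
    (hcontp.integrableOn_compact (isCompact_closedBall _ _)).mono_set hsub
  have hmv := mean_value hνc measurePreserving_rot_disc (h := fun w => g (z + r * w))
    (hg.comp (by fun_prop) (hmaps.mono_left hsub)) hint
  simp only [mul_zero, add_zero] at hmv
  have h1 : ‖g z‖ ≤ ⨍ w, ‖g (z + r * w)‖ ∂ν := by
    rw [average_eq, smul_eq_mul, inv_mul_eq_div, le_div_iff₀ hV]
    have := norm_integral_le_integral_norm (μ := ν) (fun w : ℂ => g (z + r * w))
    rw [hmv, norm_smul, Real.norm_of_nonneg hV.le] at this
    linarith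
  have : NeZero ν := ⟨fun h => by rw [h] at hV; simp at hV⟩
  have h2 := (convexOn_rpow hp.le).map_average_le (μ := ν) (f := fun w : ℂ => ‖g (z + r * w)‖)
    (Real.continuous_rpow_const (by linarith)).continuousOn isClosed_Ici
    (Filter.Eventually.of_forall fun w => mem_Ici.2 (norm_nonneg _)) hint.norm hintp
  have h3 : ‖g z‖ ^ p ≤ (ν.real univ)⁻¹ * ((r ^ 2)⁻¹ * ∫ w in ball z r, ‖g w‖ ^ p) := by
    refine (Real.rpow_le_rpow (norm_nonneg _) h1 (by linarith)).trans (h2.trans ?_)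
    rw [average_eq, smul_eq_mul, integral_disc_scale (fun w => ‖g w‖ ^ p) z hr0]
  have hballsub : ball z r ⊆ unitDisc := by
    intro w hw
    have : ‖w - z‖ < r := mem_ball_iff_norm.1 hw
    have h4 : ‖w‖ ≤ ‖z‖ + ‖w - z‖ := by
      have := norm_add_le z (w - z); simpa using this
    simp only [unitDisc, mem_ball_zero_iff]; linarith
  have hwt : ∀ w ∈ ball z r, 1 ≤ Real.pi / (α + 1) * (3 * δ) ^ (-α) * wt α w := by
    intro w hw
    have hw1 := hballsub hw
    have hpos := one_sub_sq_pos hw1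
    have : ‖w - z‖ < r := mem_ball_iff_norm.1 hw
    have h4 : ‖z‖ ≤ ‖w‖ + ‖w - z‖ := by
      have := norm_sub_le w (w - z); simpa using this
    have h5 : 1 - ‖w‖ ^ 2 ≤ 3 * δ := by
      have : ‖w‖ < 1 := by simpa [unitDisc] using hw1
      nlinarith [norm_nonneg w]
    have h6 := Real.rpow_le_rpow_of_nonpos hpos h5 hα0.le
    have h7 : (3 * δ) ^ (-α) * (3 * δ) ^ α = 1 := by
      rw [← Real.rpow_add (by positivity)]; simp
    have h8 : Real.pi / (α + 1) * (3 * δ) ^ (-α) * wt α w =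
        (3 * δ) ^ (-α) * (1 - ‖w‖ ^ 2) ^ α := by
      unfold wt
      field_simp
    rw [h8]
    exact h7.symm.le.trans (mul_le_mul_of_nonneg_left h6 (by positivity))
  rw [integrable_muA hα] at hgi
  have h4 : ∫ w in ball z r, ‖g w‖ ^ p ≤
      Real.pi / (α + 1) * (3 * δ) ^ (-α) * ∫ w, ‖g w‖ ^ p ∂(muA α) := by
    rw [integral_muA hα]
    simp only [smul_eq_mul] at hgi ⊢
    have h9 : ∫ w in ball z r, ‖g w‖ ^ p ≤
        ∫ w in ball z r, Real.pi / (α + 1) * (3 * δ) ^ (-α) * (wt α w * ‖g w‖ ^ p) := by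
      apply setIntegral_mono_on₀
      · have hcc : ContinuousOn (fun w => ‖g w‖ ^ p) (closedBall z r) := by
          refine (Real.continuous_rpow_const (by linarith)).comp_continuousOn
            (hg.continuousOn.mono ?_).norm
          intro w hw
          have : ‖w - z‖ ≤ r := mem_closedBall_iff_norm.1 hw
          have h4 : ‖w‖ ≤ ‖z‖ + ‖w - z‖ := by
            have := norm_add_le z (w - z); simpa using this
          simp only [unitDisc, mem_ball_zero_iff]; linarith
        exact (hcc.integrableOn_compact (isCompact_closedBall _ _)).mono_set ball_subset_closedBall
      · exact (hgi.mono_set hballsub).const_mul _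
      · exact measurableSet_ball.nullMeasurableSet
      · intro w hw
        have := hwt w hw
        have h10 : 0 ≤ ‖g w‖ ^ p := by positivity
        nlinarith
    rw [integral_const_mul] at h9
    refine h9.trans ?_
    have hnn : 0 ≤ Real.pi / (α + 1) * (3 * δ) ^ (-α) := by positivity
    apply mul_le_mul_of_nonneg_left _ hnn
    apply setIntegral_mono_set hgi
    · filter_upwards [ae_restrict_mem measurableSet_unitDisc] with w hw
      exact mul_nonneg (wt_nonneg hα hw) (by positivity)
    · exact LE.le.eventuallyLE hballsub
  refine h3.trans ?_
  calc _ ≤ (ν.real univ)⁻¹ * ((r ^ 2)⁻¹ * (Real.pi / (α + 1) * (3 * δ) ^ (-α) * ∫ w, ‖g w‖ ^ p ∂(muA α))) := by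
        gcongr
    _ = _ := by
        have e1 : δ ^ (-(2 + α)) = (δ ^ 2)⁻¹ * δ ^ (-α) := by
          rw [neg_add, Real.rpow_add hδ0, Real.rpow_neg hδ0.le]; norm_num
        rw [e1, Real.mul_rpow (by norm_num) hδ0.le, hr]
        field_simp
        ring

/-! ### From angular regularity to radial oscillation -/

/-- Hölder continuity in the rotation angle, with constants growing towards the boundary, bounds the
angular derivative. Over the angle `δ = 1 - |z|` the increment of `F` is compared with
`δ • I * z * F' z`; the variation of the angular derivative along the way is a Cauchy estimate for
`F (exp (σ * I) * w) - F w`. -/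
lemma deriv_growth {F : ℂ → ℂ} (hF : DifferentiableOn ℂ F unitDisc) {κ β K : ℝ} (hκ : 0 ≤ κ)
    (hβ : 0 ≤ β) (hK : 0 ≤ K)
    (hrot : ∀ t : ℝ, ∀ z ∈ unitDisc,
      ‖F (Complex.exp (t * I) * z) - F z‖ ≤ K * (1 - ‖z‖) ^ (-κ) * |t| ^ β)
    {z : ℂ} (hz : z ∈ unitDisc) :
    ‖z * deriv F z‖ ≤ (1 + 2 ^ (κ + 1)) * K * (1 - ‖z‖) ^ (β - κ - 1) := by
  have hz1 : ‖z‖ < 1 := by simpa [unitDisc] using hz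
  set δ := 1 - ‖z‖ with hδ
  have hδ0 : 0 < δ := by linarith
  have hFd : ∀ w ∈ unitDisc, HasDerivAt F (deriv F w) w := fun w hw =>
    (hF.differentiableAt (isOpen_ball.mem_nhds hw)).hasDerivAt
  have hmem : ∀ σ : ℝ, Complex.exp (σ * I) * z ∈ unitDisc := fun σ => (exp_mul_mem σ).2 hz
  have hG : ∀ σ : ℝ, 0 ≤ σ → σ ≤ δ →
      ‖Complex.exp (σ * I) * deriv F (Complex.exp (σ * I) * z) - deriv F z‖ ≤
        K * (δ / 2) ^ (-κ) * δ ^ β / (δ / 2) := by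
    intro σ h0 h1
    have hGd : ∀ w ∈ unitDisc, HasDerivAt (fun w => F (Complex.exp (σ * I) * w) - F w)
        (Complex.exp (σ * I) * deriv F (Complex.exp (σ * I) * w) - deriv F w) w := by
      intro w hw
      have h2 := (hFd _ ((exp_mul_mem σ).2 hw)).comp w ((hasDerivAt_id w).const_mul (Complex.exp (σ * I)))
      refine (h2.sub (hFd w hw)).congr_deriv ?_
      simp only [mul_one]; ring
    rw [← (hGd z hz).deriv]
    have hsub : closedBall z (δ / 2) ⊆ unitDisc := by
      intro w hw
      have h3 := mem_closedBall_iff_norm.1 hw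
      have h4 : ‖w‖ ≤ ‖z‖ + ‖w - z‖ := by
        have := norm_add_le z (w - z); simpa using this
      simp only [unitDisc, mem_ball_zero_iff]; linarith
    refine Complex.norm_deriv_le_of_forall_mem_sphere_norm_le (by positivity) ?_ ?_
    · have hd : DifferentiableOn ℂ (fun w => F (Complex.exp (σ * I) * w) - F w) unitDisc :=
        fun w hw => (hGd w hw).differentiableAt.differentiableWithinAt
      exact (hd.mono hsub).diffContOnCl_ball (subset_refl _)
    · intro w hw
      have hw2 := hsub (sphere_subset_closedBall hw)
      have h3 := mem_sphere_iff_norm.1 hw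
      have h4 : ‖w‖ ≤ ‖z‖ + ‖w - z‖ := by
        have := norm_add_le z (w - z); simpa using this
      refine (hrot σ w hw2).trans ?_
      rw [abs_of_nonneg h0]
      have h5 : (1 - ‖w‖) ^ (-κ) ≤ (δ / 2) ^ (-κ) :=
        Real.rpow_le_rpow_of_nonpos (by positivity) (by linarith) (by linarith)
      gcongr
  have hφ : ∀ σ : ℝ, HasDerivAt (fun σ : ℝ => F (Complex.exp (σ * I) * z) - (σ : ℂ) * (I * z * deriv F z))
      (I * z * (Complex.exp (σ * I) * deriv F (Complex.exp (σ * I) * z) - deriv F z)) σ := by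
    intro σ
    have h1 : HasDerivAt (fun σ : ℂ => Complex.exp (σ * I) * z) (Complex.exp (σ * I) * I * z) (σ : ℂ) := by
      have := (((hasDerivAt_id (σ : ℂ)).mul_const I).cexp).mul_const z
      simpa using this
    have h2 := (hFd _ (hmem σ)).comp (σ : ℂ) h1
    have h3 := (h2.sub ((hasDerivAt_id (σ : ℂ)).mul_const (I * z * deriv F z))).comp_ofReal
    refine h3.congr_deriv ?_
    ring
  have hmv := (convex_Icc (0:ℝ) δ).norm_image_sub_le_of_norm_hasDerivWithin_le
    (f := fun σ : ℝ => F (Complex.exp (σ * I) * z) - (σ : ℂ) * (I * z * deriv F z))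
    (C := K * (δ / 2) ^ (-κ) * δ ^ β / (δ / 2))
    (fun σ _ => (hφ σ).hasDerivWithinAt) (fun σ hσ => by
      refine le_trans ?_ (hG σ hσ.1 hσ.2)
      rw [norm_mul, norm_mul, Complex.norm_I, one_mul]
      exact mul_le_of_le_one_left (norm_nonneg _) hz1.le)
    (left_mem_Icc.2 hδ0.le) (right_mem_Icc.2 hδ0.le)
  simp only [ofReal_zero, zero_mul, Complex.exp_zero, one_mul, sub_zero] at hmv
  have hr := hrot δ z hz
  rw [abs_of_pos hδ0, ← hδ] at hr
  rw [Real.norm_of_nonneg hδ0.le] at hmv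
  have h6 : δ * ‖z * deriv F z‖ ≤ K * δ ^ (-κ) * δ ^ β + K * (δ / 2) ^ (-κ) * δ ^ β / (δ / 2) * δ := by
    have : ‖(δ : ℂ) * (I * z * deriv F z)‖ = δ * ‖z * deriv F z‖ := by
      rw [mul_assoc I, norm_mul, norm_mul I, Complex.norm_I, one_mul, Complex.norm_real,
        Real.norm_of_nonneg hδ0.le]
    rw [← this]
    have h7 : (δ : ℂ) * (I * z * deriv F z) = (F (Complex.exp (δ * I) * z) - F z) -
      (F (Complex.exp (δ * I) * z) - (δ : ℂ) * (I * z * deriv F z) - F z) := by ring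
    rw [h7]
    exact (norm_sub_le _ _).trans (add_le_add hr hmv)
  have e1 : δ ^ (β - κ - 1) = δ ^ β * δ ^ (-κ) / δ := by
    rw [Real.rpow_sub_one hδ0.ne', sub_eq_add_neg, Real.rpow_add hδ0]
  have e2 : (δ / 2) ^ (-κ) = δ ^ (-κ) * 2 ^ κ := by
    rw [Real.div_rpow hδ0.le (by norm_num), Real.rpow_neg (by norm_num : (0:ℝ) ≤ 2), div_inv_eq_mul]
  rw [e2] at h6
  rw [e1, Real.rpow_add_one (by norm_num)]
  rw [← le_div_iff₀' hδ0] at h6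
  refine h6.trans (le_of_eq ?_)
  field_simp

/-- Integration of the derivative bound along the radius, on which `|z| ≥ 1 / 2`. -/
lemma radial_osc {F : ℂ → ℂ} (hF : DifferentiableOn ℂ F unitDisc) {A γ : ℝ} (hγ : 0 < γ)
    (hA : ∀ z ∈ unitDisc, ‖z * deriv F z‖ ≤ A * (1 - ‖z‖) ^ (γ - 1))
    (hA0 : 0 ≤ A) {ρ : ℝ} (hρ : 1 / 2 ≤ ρ) {z : ℂ} (hz : z ∈ unitDisc) (hρz : ρ ≤ ‖z‖) :
    ‖F z - F ((ρ / ‖z‖ : ℝ) * z)‖ ≤ 2 * A / γ * (1 - ρ) ^ γ := by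
  have hz1 : ‖z‖ < 1 := by simpa [unitDisc] using hz
  have hz0 : 0 < ‖z‖ := by linarith
  set u : ℂ := z / ‖z‖ with hu
  have hun : ‖u‖ = 1 := by
    rw [hu, norm_div, Complex.norm_real, norm_norm, div_self hz0.ne']
  have hmem : ∀ t ∈ Icc ρ ‖z‖, (t : ℂ) * u ∈ unitDisc ∧ ‖(t : ℂ) * u‖ = t := by
    intro t ht
    have : ‖(t : ℂ) * u‖ = t := by
      rw [norm_mul, hun, mul_one, Complex.norm_real, Real.norm_of_nonneg (by linarith [ht.1])]
    refine ⟨?_, this⟩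
    simp only [unitDisc, mem_ball_zero_iff, this]; linarith [ht.2]
  have hd : ∀ t ∈ Icc ρ ‖z‖, HasDerivAt (fun t : ℝ => F (t * u) - F (ρ * u))
      (deriv F (t * u) * u) t := by
    intro t ht
    have h1 := (hF.differentiableAt (isOpen_ball.mem_nhds (hmem t ht).1)).hasDerivAt
    have h2 := h1.comp (t : ℂ) ((hasDerivAt_id (t : ℂ)).mul_const u)
    refine (h2.sub_const (F (ρ * u))).comp_ofReal.congr_deriv ?_
    simp
  have hB : ∀ t ∈ Icc ρ ‖z‖, HasDerivAt (fun t : ℝ => 2 * A / γ * ((1 - ρ) ^ γ - (1 - t) ^ γ))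
      (2 * A * (1 - t) ^ (γ - 1)) t := by
    intro t ht
    have h1 := ((hasDerivAt_id t).const_sub 1).rpow_const (p := γ) (Or.inl (by
      simp only [id]; linarith [ht.2]))
    refine ((h1.const_sub ((1 - ρ) ^ γ)).const_mul (2 * A / γ)).congr_deriv ?_
    simp only [id]
    field_simp
  have := image_norm_le_of_norm_deriv_right_le_deriv_boundary'
    (f := fun t : ℝ => F (t * u) - F (ρ * u)) (a := ρ) (b := ‖z‖)
    (fun t ht => (hd t ht).continuousAt.continuousWithinAt)
    (fun t ht => (hd t (Ico_subset_Icc_self ht)).hasDerivWithinAt)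
    (B := fun t : ℝ => 2 * A / γ * ((1 - ρ) ^ γ - (1 - t) ^ γ))
    (by simp)
    (fun t ht => (hB t ht).continuousAt.continuousWithinAt)
    (fun t ht => (hB t (Ico_subset_Icc_self ht)).hasDerivWithinAt)
    (fun t ht => by
      obtain ⟨m1, m2⟩ := hmem t (Ico_subset_Icc_self ht)
      have h3 := hA _ m1
      rw [norm_mul, m2] at h3
      rw [norm_mul, hun, mul_one]
      nlinarith [norm_nonneg (deriv F (t * u)), ht.1])
    (right_mem_Icc.2 hρz)
  have e1 : ((‖z‖ : ℝ) : ℂ) * u = z := by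
    have hzc : ((‖z‖ : ℝ) : ℂ) ≠ 0 := by
      rw [Ne, Complex.ofReal_eq_zero]; linarith
    rw [hu]; exact mul_div_cancel₀ z hzc
  have e2 : (ρ : ℂ) * u = (ρ / ‖z‖ : ℝ) * z := by
    rw [hu]; push_cast; ring
  rw [e1, e2] at this
  refine this.trans ?_
  have h5 : 0 ≤ (1 - ‖z‖) ^ γ := Real.rpow_nonneg (by linarith) _
  have h6 : 0 ≤ 2 * A / γ := by positivity
  nlinarith

/-! ### Duality and uniform convexity in the Bergman space -/

lemma memAp_iff {p α : ℝ} (hα : -1 < α) (f : ℂ → ℂ) :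
    MemAp p α f ↔ DifferentiableOn ℂ f unitDisc ∧ Integrable (fun z => ‖f z‖ ^ p) (muA α) := by
  rw [integrable_muA hα]
  simp only [MemAp, smul_eq_mul, mul_comm]

lemma bNorm_eq {p α : ℝ} (hα : -1 < α) (f : ℂ → ℂ) :
    bNorm p α f = (∫ z, ‖f z‖ ^ p ∂(muA α)) ^ (1 / p) := by
  rw [integral_muA hα]
  simp only [bNorm, smul_eq_mul, mul_comm]

lemma pairing_eq {α : ℝ} (hα : -1 < α) (f k : ℂ → ℂ) :
    pairing α f k = ∫ z, f z * (starRingEnd ℂ) (k z) ∂(muA α) := by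
  rw [integral_muA hα]
  simp only [pairing, real_smul, mul_comm]

lemma aesm_muA {α : ℝ} {f : ℂ → ℂ} (hf : DifferentiableOn ℂ f unitDisc) :
    AEStronglyMeasurable f (muA α) :=
  (hf.continuousOn.aestronglyMeasurable measurableSet_unitDisc).mono_ac
    (withDensity_absolutelyContinuous _ _)

lemma ae_mem_muA (α : ℝ) : ∀ᵐ z ∂(muA α), z ∈ unitDisc := by
  rw [ae_iff]; exact muA_compl α

lemma memLp_iff {p α : ℝ} (hp : 0 < p) {f : ℂ → ℂ} (hf : DifferentiableOn ℂ f unitDisc) :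
    Integrable (fun z => ‖f z‖ ^ p) (muA α) ↔ MemLp f (ENNReal.ofReal p) (muA α) := by
  have := integrable_norm_rpow_iff (p := ENNReal.ofReal p) (aesm_muA (α := α) hf) (by simpa using hp)
    (by simp)
  rwa [ENNReal.toReal_ofReal hp.le] at this

lemma memAp_iff_memLp {p α : ℝ} (hα : -1 < α) (hp : 0 < p) (f : ℂ → ℂ) :
    MemAp p α f ↔ DifferentiableOn ℂ f unitDisc ∧ MemLp f (ENNReal.ofReal p) (muA α) := by
  rw [memAp_iff hα]
  exact and_congr_right fun h => memLp_iff hp h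

lemma MemAp.rot {p α : ℝ} (hα : -1 < α) {f : ℂ → ℂ} (hf : MemAp p α f) (t : ℝ) :
    MemAp p α (fun z => f (Complex.exp (t * I) * z)) := by
  rw [memAp_iff hα] at hf ⊢
  refine ⟨hf.1.comp (by fun_prop) fun z hz => (exp_mul_mem t).2 hz, ?_⟩
  exact (measurePreserving_rot_muA α t).integrable_comp_of_integrable
    (g := fun z => ‖f z‖ ^ p) hf.2

lemma integral_rot (α t : ℝ) {E : Type*} [NormedAddCommGroup E] [NormedSpace ℝ E] (f : ℂ → E) :
    ∫ z, f (Complex.exp (t * I) * z) ∂(muA α) = ∫ z, f z ∂(muA α) :=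
  (measurePreserving_rot_muA α t).integral_comp (measurableEmbedding_rot t) f

lemma MemAp.add {p α : ℝ} (hα : -1 < α) (hp : 0 < p) {f g : ℂ → ℂ} (hf : MemAp p α f)
    (hg : MemAp p α g) : MemAp p α (fun z => f z + g z) := by
  rw [memAp_iff_memLp hα hp] at *
  exact ⟨hf.1.fun_add hg.1, hf.2.add hg.2⟩

lemma MemAp.const_mul {p α : ℝ} (hα : -1 < α) (hp : 0 < p) {f : ℂ → ℂ} (hf : MemAp p α f)
    (c : ℂ) : MemAp p α (fun z => c * f z) := by
  rw [memAp_iff_memLp hα hp] at *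
  exact ⟨hf.1.const_mul c, hf.2.const_mul c⟩

lemma MemAp.sub {p α : ℝ} (hα : -1 < α) (hp : 0 < p) {f g : ℂ → ℂ} (hf : MemAp p α f)
    (hg : MemAp p α g) : MemAp p α (fun z => f z - g z) := by
  rw [memAp_iff_memLp hα hp] at *
  exact ⟨hf.1.fun_sub hg.1, hf.2.sub hg.2⟩

lemma integrable_pairing {p q α : ℝ} (hα : -1 < α) (hpq : p.HolderConjugate q) {f k : ℂ → ℂ}
    (hf : MemAp p α f) (hk : MemAp q α k) :
    Integrable (fun z => f z * (starRingEnd ℂ) (k z)) (muA α) := by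
  rw [memAp_iff_memLp hα hpq.pos] at hf
  rw [memAp_iff_memLp hα hpq.symm.pos] at hk
  have : ENNReal.HolderConjugate (ENNReal.ofReal p) (ENNReal.ofReal q) := hpq.ennrealOfReal
  exact hf.2.integrable_mul hk.2.star

lemma holder_pairing {p q α : ℝ} (hα : -1 < α) (hpq : p.HolderConjugate q) {f k : ℂ → ℂ}
    (hf : MemAp p α f) (hk : MemAp q α k) :
    ‖pairing α f k‖ ≤ bNorm p α f * bNorm q α k := by
  rw [memAp_iff_memLp hα hpq.pos] at hf
  rw [memAp_iff_memLp hα hpq.symm.pos] at hk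
  rw [pairing_eq hα, bNorm_eq hα, bNorm_eq hα]
  refine (norm_integral_le_integral_norm _).trans ?_
  simp only [norm_mul, RCLike.norm_conj]
  exact integral_mul_le_Lp_mul_Lq_of_nonneg hpq
    (Filter.Eventually.of_forall fun z => norm_nonneg _)
    (Filter.Eventually.of_forall fun z => norm_nonneg _) hf.2.norm hk.2.norm

lemma pairing_add {p q α : ℝ} (hα : -1 < α) (hpq : p.HolderConjugate q) {f g k : ℂ → ℂ}
    (hf : MemAp p α f) (hg : MemAp p α g) (hk : MemAp q α k) :
    pairing α (fun z => f z + g z) k = pairing α f k + pairing α g k := by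
  rw [pairing_eq hα, pairing_eq hα, pairing_eq hα,
    ← integral_add (integrable_pairing hα hpq hf hk) (integrable_pairing hα hpq hg hk)]
  simp only [add_mul]

lemma pairing_const_mul {α : ℝ} (hα : -1 < α) (c : ℂ) (f k : ℂ → ℂ) :
    pairing α (fun z => c * f z) k = c * pairing α f k := by
  rw [pairing_eq hα, pairing_eq hα, ← integral_const_mul]
  simp only [mul_assoc]

lemma bNorm_const_mul {p α : ℝ} (hα : -1 < α) (hp : 0 < p) (c : ℂ) (f : ℂ → ℂ) :
    bNorm p α (fun z => c * f z) = ‖c‖ * bNorm p α f := by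
  rw [bNorm_eq hα, bNorm_eq hα]
  simp only [norm_mul, Real.mul_rpow (norm_nonneg _) (norm_nonneg _)]
  rw [integral_const_mul, Real.mul_rpow (by positivity) (integral_nonneg fun z => by positivity),
    ← Real.rpow_mul (norm_nonneg _), mul_one_div_cancel hp.ne', Real.rpow_one]

lemma bNorm_nonneg {p α : ℝ} (hα : -1 < α) (f : ℂ → ℂ) : 0 ≤ bNorm p α f := by
  rw [bNorm_eq hα]
  exact Real.rpow_nonneg (integral_nonneg fun z => by positivity) _

lemma bNorm_rpow {p α : ℝ} (hα : -1 < α) (hp : 0 < p) (f : ℂ → ℂ) :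
    bNorm p α f ^ p = ∫ z, ‖f z‖ ^ p ∂(muA α) := by
  rw [bNorm_eq hα, ← Real.rpow_mul (integral_nonneg fun z => by positivity),
    one_div_mul_cancel hp.ne', Real.rpow_one]

/-- The extremal value is the norm of the functional given by `k`. Dividing by `‖h‖ + ε / (M + 1)`
instead of `‖h‖` avoids treating `‖h‖ = 0` separately. -/
lemma extremal_dual {p α : ℝ} (hα : -1 < α) (hp : 0 < p) {k F : ℂ → ℂ}
    (hF : IsExtremalFor p α k F) (hM : 0 ≤ (pairing α F k).re) {h : ℂ → ℂ} (hh : MemAp p α h) :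
    (pairing α h k).re ≤ (pairing α F k).re * bNorm p α h := by
  set M := (pairing α F k).re with hMdef
  apply le_of_forall_pos_le_add
  intro ε hε
  have hb := bNorm_nonneg (p := p) hα h
  set l := bNorm p α h + ε / (M + 1) with hl
  have hl0 : 0 < l := by positivity
  have h1 := hF.2.2 (fun z => ((l⁻¹ : ℝ) : ℂ) * h z) (hh.const_mul hα hp _) (by
    rw [bNorm_const_mul hα hp, Complex.norm_real, Real.norm_of_nonneg (by positivity),
      inv_mul_le_iff₀ hl0, mul_one, hl]
    have : 0 ≤ ε / (M + 1) := by positivity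
    linarith)
  rw [pairing_const_mul hα, Complex.re_ofReal_mul, inv_mul_le_iff₀ hl0] at h1
  refine h1.trans ?_
  have : M * (ε / (M + 1)) ≤ ε := by
    rw [mul_div_assoc', div_le_iff₀ (by positivity)]
    nlinarith
  rw [← hMdef, hl]
  linarith

/-- Unit vectors whose midpoint has nearly unit norm are close. -/
lemma uc_integral {p α e C : ℝ} (hα : -1 < α) (hp : 0 < p) (hC : 0 < C) (huc : UCEst p e C)
    {f g : ℂ → ℂ} (hf : MemAp p α f) (hg : MemAp p α g)
    (hf1 : ∫ z, ‖f z‖ ^ p ∂(muA α) = 1) (hg1 : ∫ z, ‖g z‖ ^ p ∂(muA α) = 1)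
    {η : ℝ} (hη : 0 < η) (h : 1 - η ≤ ∫ z, ‖(f z + g z) / 2‖ ^ p ∂(muA α)) :
    ∫ z, ‖f z - g z‖ ^ p ∂(muA α) ≤ 3 * C * η ^ e := by
  have hs : MemAp p α (fun z => (f z + g z) / 2) := by
    have := (hf.add hα hp hg).const_mul hα hp (2⁻¹)
    simpa only [div_eq_inv_mul] using this
  have hd := hf.sub hα hp hg
  rw [memAp_iff hα] at hf hg hs hd
  have i1 := hf.2.add hg.2
  have i2 := ((i1.div_const 2).sub hs.2).div_const η
  have hle : ∫ z, ‖f z - g z‖ ^ p ∂(muA α) ≤ ∫ z, C * η ^ e *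
      (((‖f z‖ ^ p + ‖g z‖ ^ p) / 2 - ‖(f z + g z) / 2‖ ^ p) / η
        + (‖f z‖ ^ p + ‖g z‖ ^ p)) ∂(muA α) :=
    integral_mono hd.2 ((i2.add i1).const_mul _) fun z => huc η hη (f z) (g z)
  refine hle.trans ?_
  have e1 : ∫ z, (‖f z‖ ^ p + ‖g z‖ ^ p) ∂(muA α) = 2 := by
    rw [integral_add hf.2 hg.2, hf1, hg1]; norm_num
  have e2 : ∫ z, (((‖f z‖ ^ p + ‖g z‖ ^ p) / 2 - ‖(f z + g z) / 2‖ ^ p) / η) ∂(muA α) =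
      (1 - ∫ z, ‖(f z + g z) / 2‖ ^ p ∂(muA α)) / η := by
    rw [integral_div]
    have := integral_sub (i1.div_const 2) hs.2
    simp only [Pi.add_apply] at this
    rw [this, integral_div, e1]; norm_num
  rw [integral_const_mul]
  have e3 := integral_add i2 i1
  simp only [Pi.add_apply, Pi.sub_apply] at e3
  rw [e3, e2, e1]
  have h5 : (1 - ∫ z, ‖(f z + g z) / 2‖ ^ p ∂(muA α)) / η ≤ 1 := by
    rw [div_le_one hη]; linarith
  have : 0 ≤ C * η ^ e := by positivity
  nlinarith

/-- Unit vectors whose midpoint nearly attains the extremal value are close, because that midpoint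
then has norm at least `1 - η`. -/
lemma extremal_close {p q α e C : ℝ} (hα : -1 < α) (hpq : p.HolderConjugate q) (hC : 0 < C)
    (huc : UCEst p e C) {k F : ℂ → ℂ} (hk : MemAp q α k)
    (hF : IsExtremalFor p α k F) (hM : 0 < (pairing α F k).re)
    {f g : ℂ → ℂ} (hf : MemAp p α f) (hg : MemAp p α g)
    (hf1 : ∫ z, ‖f z‖ ^ p ∂(muA α) = 1) (hg1 : ∫ z, ‖g z‖ ^ p ∂(muA α) = 1)
    {η : ℝ} (hη : 0 < η)
    (h : 2 * (pairing α F k).re * (1 - η) ≤ (pairing α f k).re + (pairing α g k).re) :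
    ∫ z, ‖f z - g z‖ ^ p ∂(muA α) ≤ 3 * C * (p * η) ^ e := by
  have hp := hpq.pos
  have hs0 := hf.add hα hp hg
  have hs : MemAp p α (fun z => (f z + g z) / 2) := by
    have := hs0.const_mul hα hp (2⁻¹)
    simpa only [div_eq_inv_mul] using this
  apply uc_integral hα hp hC huc hf hg hf1 hg1 (by positivity)
  have h1 := extremal_dual hα hp hF hM.le hs
  have h2 : pairing α (fun z => (f z + g z) / 2) k = 2⁻¹ * (pairing α f k + pairing α g k) := by
    rw [← pairing_add hα hpq hf hg hk, ← pairing_const_mul hα]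
    simp only [div_eq_inv_mul]
  have h3 : (2⁻¹ * (pairing α f k + pairing α g k)).re =
      ((pairing α f k).re + (pairing α g k).re) / 2 := by
    rw [show (2⁻¹ : ℂ) = ((2⁻¹ : ℝ) : ℂ) by push_cast; rfl, Complex.re_ofReal_mul, Complex.add_re]
    ring
  rw [h2, h3] at h1
  have h4 : 1 - η ≤ bNorm p α (fun z => (f z + g z) / 2) := by
    have : (pairing α F k).re * (1 - η) ≤
      (pairing α F k).re * bNorm p α (fun z => (f z + g z) / 2) := by linarith
    exact le_of_mul_le_mul_left this hM
  rw [← bNorm_rpow hα hp]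
  by_cases hη1 : η ≤ 1
  · have h5 := one_add_mul_self_le_rpow_one_add (s := -η) (by linarith) hpq.lt.le
    have h6 := Real.rpow_le_rpow (by linarith) h4 hp.le
    rw [← sub_eq_add_neg] at h5
    linarith
  · have h5 : 0 ≤ bNorm p α (fun z => (f z + g z) / 2) ^ p :=
      Real.rpow_nonneg (bNorm_nonneg hα _) _
    have : 1 < p := hpq.lt
    nlinarith

/-! ### Closeness to rotations and to constants -/

/-- A rotation by `t` of the first argument moves to a rotation by `-t` of the second. -/
lemma pairing_rot {α : ℝ} (hα : -1 < α) (F k : ℂ → ℂ) (t : ℝ) :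
    pairing α (fun z => F (Complex.exp (t * I) * z)) k =
      pairing α F (fun z => k (Complex.exp (-t * I) * z)) := by
  rw [pairing_eq hα, pairing_eq hα,
    ← integral_rot α t (fun z => F z * (starRingEnd ℂ) (k (Complex.exp (-t * I) * z)))]
  congr 1
  ext z
  rw [← mul_assoc (Complex.exp (-t * I)), ← Complex.exp_add, neg_mul, neg_add_cancel,
    Complex.exp_zero, one_mul]

lemma pairing_rot_sum {p q α : ℝ} (hα : -1 < α) (hpq : p.HolderConjugate q) {F k : ℂ → ℂ}
    (hk : MemAp q α k) (hF : MemAp p α F) (t : ℝ) :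
    pairing α (fun z => F (Complex.exp (t * I) * z)) k +
      pairing α (fun z => F (Complex.exp ((-t : ℝ) * I) * z)) k =
    2 * pairing α F k + pairing α F (fun z =>
          k (Complex.exp (t * Complex.I) * z)
            + k (Complex.exp (-t * Complex.I) * z) - 2 * k z) := by
  have hm : MemAp q α (fun z => k (Complex.exp (-t * I) * z)) := by
    simpa using hk.rot hα (-t)
  have i1 := integrable_pairing hα hpq hF hm
  have i2 := integrable_pairing hα hpq hF (hk.rot hα t)
  have i3 := integrable_pairing hα hpq hF hk
  rw [pairing_rot hα, pairing_rot hα]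
  simp only [ofReal_neg, neg_neg]
  rw [pairing_eq hα, pairing_eq hα, pairing_eq hα, pairing_eq hα, ← integral_add i1 i2,
    ← integral_const_mul, ← integral_add (i3.const_mul 2)]
  · congr 1
    ext z
    simp only [map_sub, map_add, map_mul, Complex.conj_ofNat]
    ring
  · convert (i2.add i1).sub (i3.const_mul 2) using 1
    ext z
    simp only [map_sub, map_add, map_mul, Complex.conj_ofNat, Pi.add_apply, Pi.sub_apply]
    ring

/-- Smoothness of the kernel under rotation is inherited by the extremal function: the average of
`F` rotated by `t/2` and by `-t/2` is nearly extremal. -/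
lemma rot_close {p q α e C B : ℝ} (hα : -1 < α) (hpq : p.HolderConjugate q) (he : 0 < e)
    (hC : 0 < C) (huc : UCEst p e C) {k F : ℂ → ℂ} (hk : MemAp q α k)
    (hF : IsExtremalFor p α k F) (hM : 1 / 2 ≤ (pairing α F k).re) (hB : 0 < B)
    (hk2 : ∀ t : ℝ, bNorm q α (fun z =>
          k (Complex.exp (t * Complex.I) * z)
            + k (Complex.exp (-t * Complex.I) * z) - 2 * k z) ≤ B * |t| ^ 2) (t : ℝ) :
    ∫ z, ‖F (Complex.exp (t * I) * z) - F z‖ ^ p ∂(muA α) ≤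
      3 * C * (p * B) ^ e * |t| ^ (2 * e) := by
  have hp := hpq.pos
  rcases eq_or_ne t 0 with rfl | ht
  · simp [Real.zero_rpow hp.ne', Real.zero_rpow (by positivity : 2 * e ≠ 0)]
  set s := t / 2 with hs
  have hs0 : s ≠ 0 := by rw [hs]; exact div_ne_zero ht two_ne_zero
  have hη : 0 < B * s ^ 2 := by positivity
  have h1 : ∫ z, ‖F z‖ ^ p ∂(muA α) = 1 := by
    rw [← bNorm_rpow hα hp, hF.2.1, Real.one_rpow]
  have hr : ∀ u : ℝ, ∫ z, ‖F (Complex.exp (u * I) * z)‖ ^ p ∂(muA α) = 1 := fun u => by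
    rw [integral_rot α u (fun z => ‖F z‖ ^ p), h1]
  have hsum := pairing_rot_sum hα hpq hk hF.1 s
  have hΔ : MemAp q α (fun z =>
          k (Complex.exp (s * Complex.I) * z)
            + k (Complex.exp (-s * Complex.I) * z) - 2 * k z) := by
    have h2 : MemAp q α (fun z => k (Complex.exp (-s * I) * z)) := by
      simpa using hk.rot hα (-s)
    exact ((hk.rot hα s).add hα hpq.symm.pos h2).sub hα hpq.symm.pos
      (hk.const_mul hα hpq.symm.pos 2)
  have hH := holder_pairing hα hpq hF.1 hΔ
  rw [hF.2.1, one_mul] at hH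
  have hH2 := (Complex.abs_re_le_norm _).trans (hH.trans (hk2 s))
  rw [sq_abs] at hH2
  have hH3 := (abs_le.1 hH2).1
  have hre := congrArg Complex.re hsum
  simp only [Complex.add_re, Complex.mul_re, Complex.re_ofNat, Complex.im_ofNat, zero_mul,
    sub_zero] at hre
  have key := extremal_close hα hpq hC huc hk hF (by linarith) (hF.1.rot hα s)
    (hF.1.rot hα (-s)) (hr s) (hr (-s)) hη (by rw [hre]; nlinarith)
  have hst : ∫ z, ‖F (Complex.exp (s * I) * z) - F (Complex.exp ((-s : ℝ) * I) * z)‖ ^ p ∂(muA α)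
      = ∫ z, ‖F (Complex.exp (t * I) * z) - F z‖ ^ p ∂(muA α) := by
    rw [← integral_rot α s]
    congr 1
    ext z
    rw [← mul_assoc, ← mul_assoc, ← Complex.exp_add, ← Complex.exp_add]
    congr 3
    · congr 3
      rw [hs]; push_cast; ring
    · rw [ofReal_neg, neg_mul, neg_add_cancel, Complex.exp_zero, one_mul]
  rw [hst] at key
  refine key.trans ?_
  have h4 : (p * (B * s ^ 2)) ^ e ≤ (p * B) ^ e * |t| ^ (2 * e) := by
    rw [← mul_assoc, Real.mul_rpow (by positivity) (by positivity), Real.rpow_mul (abs_nonneg t),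
      Real.rpow_two, sq_abs]
    have : s ^ 2 ≤ t ^ 2 := by rw [hs]; nlinarith [sq_nonneg t]
    gcongr
  calc 3 * C * (p * (B * s ^ 2)) ^ e ≤ 3 * C * ((p * B) ^ e * |t| ^ (2 * e)) := by gcongr
    _ = _ := by ring

/-- If the normalized constant `c` nearly attains the norm of the functional, `F` is close
to it. -/
lemma const_close {p q α e C : ℝ} (hα : -1 < α) (hpq : p.HolderConjugate q)
    (hC : 0 < C) (huc : UCEst p e C) {k F : ℂ → ℂ} (hk : MemAp q α k) (hk1 : bNorm q α k = 1)
    (hF : IsExtremalFor p α k F) {c : ℂ} (hc : MemAp p α (fun _ => c))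
    (hc1 : bNorm p α (fun _ => c) = 1) {ε : ℝ} (hε : 0 < ε) (hε2 : ε ≤ 1 / 2)
    (h : 1 - ε ≤ (pairing α (fun _ => c) k).re) :
    1 / 2 ≤ (pairing α F k).re ∧ ∫ z, ‖F z - c‖ ^ p ∂(muA α) ≤ 3 * C * (p * ε) ^ e := by
  have hp := hpq.pos
  have h1 : (pairing α (fun _ => c) k).re ≤ (pairing α F k).re := hF.2.2 _ hc hc1.le
  have h2 : (pairing α F k).re ≤ 1 := by
    have := holder_pairing hα hpq hF.1 hk
    rw [hF.2.1, hk1, one_mul] at this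
    exact (Complex.re_le_norm _).trans this
  refine ⟨by linarith, ?_⟩
  refine extremal_close hα hpq hC huc hk hF (by linarith) hF.1 hc ?_ ?_ hε (by nlinarith)
  · rw [← bNorm_rpow hα hp, hF.2.1, Real.one_rpow]
  · rw [← bNorm_rpow hα hp, hc1, Real.one_rpow]

/-- A kernel with values in a thin sector nearly attains its norm at the constants: the mean value
property for `k` and for `k ^ q`, whose arguments stay small. -/
lemma const_pairing {p q α φ : ℝ} (hα : -1 < α) (hpq : p.HolderConjugate q)
    [IsFiniteMeasure (muA α)] (hW : 0 < (muA α).real univ) (hφ : 0 < φ)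
    (hφ1 : φ < Real.pi / 2) (hφ2 : q * φ < Real.pi / 2) {k : ℂ → ℂ} (hk : MemAp q α k)
    (hk1 : bNorm q α k = 1) (hsec : ∀ z ∈ unitDisc, k z ≠ 0 ∧ |Complex.arg (k z)| < φ) :
    Real.cos φ * Real.cos (q * φ) ^ (1 / q) ≤
      (pairing α (fun _ => (((muA α).real univ ^ (-(1 / p)) : ℝ) : ℂ)) k).re := by
  have hp := hpq.pos
  have hq := hpq.symm.pos
  set W := (muA α).real univ with hWd
  have h0 : (0 : ℂ) ∈ unitDisc := by simp [unitDisc]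
  have hpi := Real.pi_pos
  have hcφ : 0 < Real.cos φ := Real.cos_pos_of_mem_Ioo ⟨by linarith, hφ1⟩
  have hqφ : 0 < q * φ := by positivity
  have hcq : 0 < Real.cos (q * φ) := Real.cos_pos_of_mem_Ioo ⟨by linarith, hφ2⟩
  have hcos : ∀ x y : ℝ, |x| ≤ y → y < Real.pi / 2 → Real.cos y ≤ Real.cos x := by
    intro x y hxy hy
    rw [← Real.cos_abs x]
    exact Real.cos_le_cos_of_nonneg_of_le_pi (abs_nonneg x) (by linarith) hxy
  have hkL := (memAp_iff_memLp hα hq k).1 hk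
  have hki : Integrable k (muA α) := hkL.2.integrable (by
    rw [← ENNReal.ofReal_one]; exact ENNReal.ofReal_le_ofReal hpq.symm.lt.le)
  have hmv := mean_value (muA_compl α) (measurePreserving_rot_muA α) hk.1 hki
  have hint : ∫ z, ‖k z‖ ^ q ∂(muA α) = 1 := by
    rw [← bNorm_rpow hα hq, hk1, Real.one_rpow]
  have hkq := ((memAp_iff hα k).1 hk).2
  -- The holomorphic power `k ^ q`, well defined since `k` avoids the negative axis.
  have hslit : ∀ z ∈ unitDisc, k z ∈ slitPlane := by
    intro z hz
    rw [Complex.mem_slitPlane_iff_arg]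
    refine ⟨fun h => ?_, (hsec z hz).1⟩
    have := (hsec z hz).2
    rw [h, abs_of_pos hpi] at this
    linarith
  have hPd : DifferentiableOn ℂ (fun z => k z ^ (q : ℂ)) unitDisc :=
    hk.1.cpow_const hslit
  have hPn : ∀ z ∈ unitDisc, ‖k z ^ (q : ℂ)‖ = ‖k z‖ ^ q := fun z hz => by
    rw [Complex.norm_cpow_real]
  have hPre : ∀ z ∈ unitDisc, ‖k z‖ ^ q * Real.cos (q * φ) ≤ (k z ^ (q : ℂ)).re := by
    intro z hz
    obtain ⟨a, b⟩ := hsec z hz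
    rw [Complex.cpow_def_of_ne_zero a, Complex.exp_re]
    have e1 : (Complex.log (k z) * (q : ℂ)).re = Real.log ‖k z‖ * q := by
      rw [mul_comm, Complex.re_ofReal_mul, Complex.log_re, mul_comm]
    have e2 : (Complex.log (k z) * (q : ℂ)).im = q * Complex.arg (k z) := by
      rw [mul_comm, Complex.im_ofReal_mul, Complex.log_im]
    rw [e1, e2, ← Real.rpow_def_of_pos (norm_pos_iff.2 a)]
    gcongr
    exact hcos _ _ (by rw [abs_mul, abs_of_pos hq]; gcongr) hφ2
  have hPi : Integrable (fun z => k z ^ (q : ℂ)) (muA α) := by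
    refine hkq.mono' (aesm_muA hPd) ?_
    filter_upwards [ae_mem_muA α] with z hz
    rw [hPn z hz]
  have hPmv := mean_value (muA_compl α) (measurePreserving_rot_muA α) hPd hPi
  have hlow : Real.cos (q * φ) ≤ W * ‖k 0‖ ^ q := by
    have h1 : ∫ z, ‖k z‖ ^ q * Real.cos (q * φ) ∂(muA α) ≤ ∫ z, (k z ^ (q : ℂ)).re ∂(muA α) := by
      refine integral_mono_ae (hkq.mul_const _) hPi.re ?_
      filter_upwards [ae_mem_muA α] with z hz using hPre z hz
    have h2 : ∫ z, (k z ^ (q : ℂ)).re ∂(muA α) = (∫ z, k z ^ (q : ℂ) ∂(muA α)).re :=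
      integral_re hPi
    rw [integral_mul_const, hint, one_mul, h2, hPmv, Complex.smul_re, smul_eq_mul] at h1
    refine h1.trans ?_
    gcongr
    exact (Complex.re_le_norm _).trans_eq (hPn 0 h0)
  have hlow' : Real.cos (q * φ) ^ (1 / q) ≤ W ^ (1 / q) * ‖k 0‖ := by
    have := Real.rpow_le_rpow hcq.le hlow (by positivity : 0 ≤ 1 / q)
    rwa [Real.mul_rpow hW.le (by positivity), ← Real.rpow_mul (norm_nonneg _),
      mul_one_div_cancel hq.ne', Real.rpow_one] at this
  have hre : ‖k 0‖ * Real.cos φ ≤ (k 0).re := by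
    rw [← Complex.norm_mul_cos_arg (k 0)]
    gcongr
    exact hcos _ _ (hsec 0 h0).2.le hφ1
  have hpair : (pairing α (fun _ => ((W ^ (-(1 / p)) : ℝ) : ℂ)) k).re =
      W ^ (1 / q) * (k 0).re := by
    rw [pairing_eq hα, integral_const_mul, Complex.re_ofReal_mul]
    have : ∫ z, (starRingEnd ℂ) (k z) ∂(muA α) = (starRingEnd ℂ) (∫ z, k z ∂(muA α)) :=
      integral_conj
    rw [this, hmv, Complex.conj_re, Complex.smul_re, smul_eq_mul, ← mul_assoc]
    congr 1
    have h3 : 1 / q = -(1 / p) + 1 := by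
      have := hpq.inv_add_inv_eq_one
      rw [one_div, one_div]; linarith
    rw [h3, Real.rpow_add_one hW.ne']
  rw [hpair]
  calc Real.cos φ * Real.cos (q * φ) ^ (1 / q) ≤ Real.cos φ * (W ^ (1 / q) * ‖k 0‖) := by gcongr
    _ = W ^ (1 / q) * (‖k 0‖ * Real.cos φ) := by ring
    _ ≤ _ := by gcongr

/-! ### Absence of zeros -/

/-- A function whose rotations vary Hölder-continuously in `A^p_α` and which is close to a positive
constant `c` in `A^p_α` has no zeros: it is within `c / 2` of `c` on `|z| ≤ ρ`, and its radial
oscillation over `ρ ≤ |z| < 1` is less than `c / 2`. -/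
lemma nonvanish {p α e D L c ρ : ℝ} (hp : 1 < p) (hα : -1 < α) (he : 2 + α < 2 * e)
    (hD : 0 < D) (hpe : ∀ g : ℂ → ℂ, DifferentiableOn ℂ g unitDisc →
      Integrable (fun z => ‖g z‖ ^ p) (muA α) → ∀ z ∈ unitDisc,
      ‖g z‖ ^ p ≤ D * (1 - ‖z‖) ^ (-(2 + α)) * ∫ w, ‖g w‖ ^ p ∂(muA α))
    (hL : 0 < L) (hρ : 1 / 2 ≤ ρ) (hρ1 : ρ < 1)
    (hρ2 : 2 * ((1 + 2 ^ ((2 + α) / p + 1)) * (D * L) ^ (1 / p)) / (2 * e / p - (2 + α) / p) *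
      (1 - ρ) ^ (2 * e / p - (2 + α) / p) < c / 2) (hc : 0 < c)
    {F : ℂ → ℂ} (hF : MemAp p α F)
    (hrot : ∀ t : ℝ, ∫ z, ‖F (Complex.exp (t * I) * z) - F z‖ ^ p ∂(muA α) ≤ L * |t| ^ (2 * e))
    (hFc : MemAp p α (fun z => F z - (c : ℂ)))
    (hcl : D * (1 - ρ) ^ (-(2 + α)) * ∫ z, ‖F z - (c : ℂ)‖ ^ p ∂(muA α) < (c / 2) ^ p) :
    ∀ z ∈ unitDisc, F z ≠ 0 := by
  have hp0 : 0 < p := by linarith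
  have hFd := hF.1
  have hrot' : ∀ t : ℝ, ∀ z ∈ unitDisc, ‖F (Complex.exp (t * I) * z) - F z‖ ≤
      (D * L) ^ (1 / p) * (1 - ‖z‖) ^ (-((2 + α) / p)) * |t| ^ (2 * e / p) := by
    intro t z hz
    have hz1 : 0 < 1 - ‖z‖ := by
      have : ‖z‖ < 1 := by simpa [unitDisc] using hz
      linarith
    have hm := (hF.rot hα t).sub hα hp0 hF
    have h1 := hpe _ hm.1 ((memAp_iff hα _).1 hm).2 z hz
    have h2 : ‖F (Complex.exp (t * I) * z) - F z‖ ^ p ≤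
        (D * L) * (1 - ‖z‖) ^ (-(2 + α)) * |t| ^ (2 * e) := by
      refine h1.trans ?_
      calc _ ≤ D * (1 - ‖z‖) ^ (-(2 + α)) * (L * |t| ^ (2 * e)) := by
            gcongr
            exact hrot t
        _ = _ := by ring
    have h3 := Real.rpow_le_rpow (by positivity) h2 (by positivity : 0 ≤ 1 / p)
    rw [← Real.rpow_mul (norm_nonneg _), mul_one_div_cancel hp0.ne', Real.rpow_one,
      Real.mul_rpow (by positivity) (by positivity), Real.mul_rpow (by positivity) (by positivity),
      ← Real.rpow_mul hz1.le, ← Real.rpow_mul (abs_nonneg t)] at h3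
    convert h3 using 3 <;> ring_nf
  have hγ : 0 < 2 * e / p - (2 + α) / p := by
    rw [← sub_div]; exact div_pos (by linarith) hp0
  have hA : ∀ z ∈ unitDisc, ‖z * deriv F z‖ ≤ ((1 + 2 ^ ((2 + α) / p + 1)) * (D * L) ^ (1 / p)) *
      (1 - ‖z‖) ^ (2 * e / p - (2 + α) / p - 1) := fun z hz =>
    deriv_growth hFd (div_nonneg (by linarith) hp0.le) (div_nonneg (by linarith) hp0.le)
      (by positivity) hrot' hz
  have hin : ∀ z ∈ unitDisc, ‖z‖ ≤ ρ → ‖F z - c‖ < c / 2 := by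
    intro z hz hzρ
    have h1 := hpe _ hFc.1 ((memAp_iff hα _).1 hFc).2 z hz
    have h2 : ‖F z - c‖ ^ p < (c / 2) ^ p := by
      refine h1.trans_lt (lt_of_le_of_lt ?_ hcl)
      have hI : 0 ≤ ∫ z, ‖F z - (c : ℂ)‖ ^ p ∂(muA α) := integral_nonneg fun z => by positivity
      have h3 : (1 - ‖z‖) ^ (-(2 + α)) ≤ (1 - ρ) ^ (-(2 + α)) :=
        Real.rpow_le_rpow_of_nonpos (by linarith) (by linarith) (by linarith)
      gcongr
    exact (Real.rpow_lt_rpow_iff (norm_nonneg _) (by positivity) hp0).1 h2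
  intro z hz hFz
  rcases le_or_gt ‖z‖ ρ with h | h
  · have := hin z hz h
    rw [hFz, zero_sub, norm_neg, Complex.norm_real, Real.norm_of_nonneg hc.le] at this
    linarith
  · have h1 := radial_osc hFd hγ hA (by positivity) hρ hz h.le
    have hz0 : 0 < ‖z‖ := by linarith
    have hn : ‖((ρ / ‖z‖ : ℝ) : ℂ) * z‖ = ρ := by
      rw [norm_mul, Complex.norm_real, Real.norm_of_nonneg (by positivity),
        div_mul_cancel₀ _ hz0.ne']
    have h2 := hin (((ρ / ‖z‖ : ℝ) : ℂ) * z)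
      (by simp only [unitDisc, mem_ball_zero_iff, hn]; exact hρ1) hn.le
    rw [hFz, zero_sub, norm_neg] at h1
    have h3 : c ≤ ‖F ((ρ / ‖z‖ : ℝ) * z)‖ + ‖F ((ρ / ‖z‖ : ℝ) * z) - c‖ := by
      have := norm_sub_le (F ((ρ / ‖z‖ : ℝ) * z)) (F ((ρ / ‖z‖ : ℝ) * z) - c)
      rwa [sub_sub_cancel, Complex.norm_real, Real.norm_of_nonneg hc.le] at this
    linarith

/-- A unit vector of `A^q_α` bounded below forces the weighted measure to be finite, and nonzero
because its norm is nonzero. -/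
lemma finite_pos {q α d : ℝ} (hα : -1 < α) (hq : 0 < q) (hd : 0 < d) {k : ℂ → ℂ}
    (hk : MemAp q α k) (hk1 : bNorm q α k = 1) (hdk : ∀ z ∈ unitDisc, d < ‖k z‖) :
    IsFiniteMeasure (muA α) ∧ 0 < (muA α).real univ := by
  have hi := ((memAp_iff hα k).1 hk).2
  have hc : Integrable (fun _ : ℂ => d ^ q) (muA α) := by
    refine hi.mono' aestronglyMeasurable_const ?_
    filter_upwards [ae_mem_muA α] with z hz
    rw [Real.norm_of_nonneg (by positivity)]
    have := (hdk z hz).le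
    gcongr
  have hfin : IsFiniteMeasure (muA α) := by
    rcases integrable_const_iff.1 hc with h | h
    · exact absurd h (by positivity)
    · exact h
  refine ⟨hfin, ?_⟩
  by_contra h0
  have h1 : muA α = 0 := by
    rw [← Measure.measure_univ_eq_zero]
    have : (muA α).real univ = 0 := le_antisymm (not_lt.1 h0) measureReal_nonneg
    exact (measureReal_eq_zero_iff).1 this
  rw [bNorm_eq hα, h1, integral_zero_measure, Real.zero_rpow (by positivity)] at hk1
  exact zero_ne_one hk1

/-- If `k ∈ A^q_α` is a unit-norm kernel with `‖k‖_{Λ*,2,A^q_α} ≤ B` whose range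
lies in a sufficiently thin sector `{|arg z| < θ/2, |z| > d}`, where `θ` depends
only on `d`, `B`, `p`, `α`, then the extremal function `F` for `k` has no zeros. -/
theorem extremal_nonvanishing_of_sector_kernel
    (d B p α : ℝ) (hd0 : 0 < d) (hd1 : d < 1) (hB : 0 < B)
    (hp1 : 1 < p) (hp2 : p ≠ 2)
    (hpα : (2 < p ∧ -1 < α ∧ α < 0) ∨ (p < 2 ∧ -1 < α ∧ α < p - 2)) :
    ∃ θ > 0, ∀ q : ℝ, 1/p + 1/q = 1 →
      ∀ k : ℂ → ℂ, MemAp q α k → bNorm q α k = 1 →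
      (∀ t : ℝ, bNorm q α (fun z =>
          k (Complex.exp (t * Complex.I) * z)
            + k (Complex.exp (-t * Complex.I) * z) - 2 * k z) ≤ B * |t| ^ 2) →
      (∀ z ∈ unitDisc, k z ≠ 0 ∧ |Complex.arg (k z)| < θ/2 ∧ d < ‖k z‖) →
      ∀ F : ℂ → ℂ, IsExtremalFor p α k F →
        ∀ z ∈ unitDisc, F z ≠ 0 := by
  have hp0 : 0 < p := by linarith
  have hα : -1 < α := by rcases hpα with h | h <;> exact h.2.1
  have hα0 : α < 0 := by rcases hpα with h | h <;> linarith [h.2.2]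
  have hconj : ∀ q : ℝ, 1 / p + 1 / q = 1 → p.HolderConjugate q := fun q h => by
    rw [Real.holderConjugate_iff]
    exact ⟨hp1, by simpa only [one_div] using h⟩
  -- If the measure is infinite or zero, no kernel satisfies the hypotheses.
  by_cases hfin : IsFiniteMeasure (muA α) ∧ 0 < (muA α).real univ
  swap
  · refine ⟨1, one_pos, fun q hq k hk hk1 _ hsec => absurd ?_ hfin⟩
    exact finite_pos hα (hconj q hq).symm.pos hd0 hk hk1 fun z hz => (hsec z hz).2.2
  obtain ⟨hfm, hW⟩ := hfin
  obtain ⟨e, C, he, he2, hC, huc⟩ := uc_pointwise hp1 hpα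
  obtain ⟨D, hD, hpe⟩ := point_eval hp1 hα hα0
  set W := (muA α).real univ with hWd
  set c : ℝ := W ^ (-(1 / p)) with hcd
  have hc : 0 < c := Real.rpow_pos_of_pos hW _
  set L := 3 * C * (p * B) ^ e with hLd
  have hL : 0 < L := by positivity
  have hγ : 0 < 2 * e / p - (2 + α) / p := by
    rw [← sub_div]; exact div_pos (by linarith) hp0
  -- The radius beyond which the radial oscillation is less than `c / 2`.
  obtain ⟨r, hr, hr2, hr1⟩ : ∃ r : ℝ, 0 < r ∧
      2 * ((1 + 2 ^ ((2 + α) / p + 1)) * (D * L) ^ (1 / p)) / (2 * e / p - (2 + α) / p) *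
      r ^ (2 * e / p - (2 + α) / p) < c / 2 ∧ r ≤ 1 / 2 := by
    have ht : Filter.Tendsto (fun r : ℝ =>
        2 * ((1 + 2 ^ ((2 + α) / p + 1)) * (D * L) ^ (1 / p)) / (2 * e / p - (2 + α) / p) *
        r ^ (2 * e / p - (2 + α) / p)) (nhdsWithin 0 (Ioi 0)) (nhds 0) := by
      have h1 := (Real.continuousAt_rpow_const (0 : ℝ) _ (Or.inr hγ.le)).tendsto.const_mul
        (2 * ((1 + 2 ^ ((2 + α) / p + 1)) * (D * L) ^ (1 / p)) / (2 * e / p - (2 + α) / p))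
      rw [Real.zero_rpow hγ.ne', mul_zero] at h1
      exact h1.mono_left nhdsWithin_le_nhds
    have h2 := (ht.eventually_lt_const (half_pos hc)).and
      (Ioc_mem_nhdsGT (by norm_num : (0 : ℝ) < 1 / 2))
    obtain ⟨r, h3, h4⟩ := h2.exists
    exact ⟨r, h4.1, h3, h4.2⟩
  -- The admissible loss in the extremal value, giving closeness to `c` on the smaller disc.
  obtain ⟨ε, hε, hε2, hε1⟩ : ∃ ε : ℝ, 0 < ε ∧
      D * r ^ (-(2 + α)) * (3 * C * (p * ε) ^ e) < (c / 2) ^ p ∧ ε ≤ 1 / 2 := by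
    have ht : Filter.Tendsto (fun ε : ℝ => D * r ^ (-(2 + α)) * (3 * C * (p * ε) ^ e))
        (nhdsWithin 0 (Ioi 0)) (nhds 0) := by
      have hcont : ContinuousAt (fun ε : ℝ => D * r ^ (-(2 + α)) * (3 * C * (p * ε) ^ e)) 0 :=
        continuousAt_const.mul (continuousAt_const.mul
          ((continuousAt_const.mul continuousAt_id).rpow_const (Or.inr he.le)))
      have h1 := hcont.tendsto
      simp only [mul_zero, Real.zero_rpow he.ne'] at h1
      exact h1.mono_left nhdsWithin_le_nhds
    have h2 := (ht.eventually_lt_const (by positivity : 0 < (c / 2) ^ p)).and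
      (Ioc_mem_nhdsGT (by norm_num : (0 : ℝ) < 1 / 2))
    obtain ⟨r, h3, h4⟩ := h2.exists
    exact ⟨r, h4.1, h3, h4.2⟩
  have hq0c := Real.HolderConjugate.conjExponent hp1
  set q₀ := p.conjExponent with hq₀
  have hq₀p : 0 < q₀ := hq0c.symm.pos
  -- The half-opening of the sector.
  obtain ⟨φ, hφ, hφ1, hφ2, hφ3⟩ : ∃ φ : ℝ, 0 < φ ∧ φ < Real.pi / 2 ∧ q₀ * φ < Real.pi / 2 ∧
      1 - ε < Real.cos φ * Real.cos (q₀ * φ) ^ (1 / q₀) := by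
    have hpi := Real.pi_pos
    have hcont : ContinuousAt (fun φ : ℝ => Real.cos φ * Real.cos (q₀ * φ) ^ (1 / q₀)) 0 := by
      refine Real.continuous_cos.continuousAt.mul (ContinuousAt.rpow_const (by fun_prop) ?_)
      left; simp
    have h1 := hcont.tendsto
    simp only [mul_zero, Real.cos_zero, Real.one_rpow, mul_one] at h1
    have h1' := h1.mono_left (nhdsWithin_le_nhds (s := Ioi 0))
    have h2 := (h1'.eventually_const_lt (by linarith : 1 - ε < 1)).and
      (Ioo_mem_nhdsGT (by positivity : (0 : ℝ) < min (Real.pi / 2) (Real.pi / 2 / q₀)))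
    obtain ⟨φ, h3, h4, h5⟩ := h2.exists
    refine ⟨φ, h4, h5.trans_le (min_le_left _ _), ?_, h3⟩
    have := h5.trans_le (min_le_right _ _)
    rw [lt_div_iff₀ hq₀p] at this
    linarith
  refine ⟨2 * φ, by positivity, fun q hq k hk hk1 hk2 hsec F hF => ?_⟩
  have hpq := hconj q hq
  obtain rfl : q = q₀ := hpq.conjugate_eq.trans rfl
  have hcm : MemAp p α (fun _ => (c : ℂ)) := by
    rw [memAp_iff hα]
    exact ⟨differentiableOn_const _, integrable_const _⟩
  have hc1 : bNorm p α (fun _ => (c : ℂ)) = 1 := by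
    rw [bNorm_eq hα, integral_const, Complex.norm_real, Real.norm_of_nonneg hc.le, smul_eq_mul,
      hcd, ← Real.rpow_mul hW.le, neg_mul, one_div_mul_cancel hp0.ne', Real.rpow_neg_one, ← hWd,
      mul_inv_cancel₀ hW.ne', Real.one_rpow]
  have hpair := const_pairing hα hpq hW hφ hφ1 hφ2 hk hk1 fun z hz =>
    ⟨(hsec z hz).1, by have := (hsec z hz).2.1; linarith⟩
  obtain ⟨hM, hclose⟩ := const_close hα hpq hC huc hk hk1 hF hcm hc1 hε hε1
    (hφ3.le.trans hpair)
  refine nonvanish (ρ := 1 - r) hp1 hα he2 hD hpe hL (by linarith) (by linarith)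
    (by rw [sub_sub_cancel]; exact hr2) hc hF.1
    (rot_close hα hpq he hC huc hk hF hM hB hk2) (hF.1.sub hα hp0 hcm) ?_
  rw [sub_sub_cancel]
  refine lt_of_le_of_lt ?_ hε2
  gcongr
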